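/- arXiv:1710.10908 — 2 statements merged into one kernel-verified Lean document; each statement's English description precedes it below -/
import Mathlib

section
/- For every prime p, every dense S-ring over G = E_9 × C_p, i.e. every S-ring 𝒜 over G for which both the subgroup A = E_9 × 1 and the subgroup P = 1 × C_p are 𝒜-subgroups, is cyclotomic. -/
open scoped Pointwise

/-- The element `\underline{X} = Σ_{x∈X} x` of the integral group ring `ℤG`. -/
noncomputable def grpSum {G : Type*} [Group G] [Fintype G] (X : Set G) :
    MonoidAlgebra ℤ G :=
  ∑ x : G, X.indicator (fun g => MonoidAlgebra.single g (1 : ℤ)) x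

/-- A Schur ring (S-ring) over a finite group `G`, described by its partition
into basic sets: (S1) `{1}` is a basic set, (S2) the class of basic sets is
closed under inverses, (S3) the ℤ-span of the sums `\underline{X}` is closed
under multiplication (i.e. is a subring of `ℤG`). -/
structure SchurRing (G : Type*) [Group G] [Fintype G] where
  basicSets : Set (Set G)
  nonempty_mem : ∀ X ∈ basicSets, X.Nonempty
  cover : ∀ g : G, ∃ X ∈ basicSets, g ∈ X
  disjoint' : ∀ X ∈ basicSets, ∀ Y ∈ basicSets, X ≠ Y → X ∩ Y = ∅
  one_mem : {(1 : G)} ∈ basicSets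
  inv_mem : ∀ X ∈ basicSets, X⁻¹ ∈ basicSets
  mul_mem : ∀ X ∈ basicSets, ∀ Y ∈ basicSets,
    grpSum X * grpSum Y ∈ Submodule.span ℤ (grpSum '' basicSets)

namespace SchurRing

variable {G : Type*} [Group G] [Fintype G]

/-- An `𝒜`-set: a union of basic sets. -/
def IsASet (A : SchurRing G) (S : Set G) : Prop :=
  ∃ T ⊆ A.basicSets, S = ⋃₀ T

/-- An `𝒜`-subgroup: a subgroup that is an `𝒜`-set. -/
def IsASubgroup (A : SchurRing G) (H : Subgroup G) : Prop :=
  A.IsASet (H : Set G)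

/-- `𝒜` is schurian: its basic sets are the orbits of the stabilizer of `1`
in some group `K` with `G_right ≤ K ≤ Sym(G)`. -/
def IsSchurian (A : SchurRing G) : Prop :=
  ∃ K : Subgroup (Equiv.Perm G), (∀ g : G, Equiv.mulRight g ∈ K) ∧
    A.basicSets = Set.range fun x : G =>
      MulAction.orbit (MulAction.stabilizer K (1 : G)) x

/-- `𝒜` is cyclotomic: its basic sets are the orbits of a subgroup of `Aut(G)`. -/
def IsCyclotomic (A : SchurRing G) : Prop :=
  ∃ M : Subgroup (MulAut G),
    A.basicSets = Set.range fun x : G => MulAction.orbit M x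

/-- `𝒜` is trivial: its basic sets are `{1}` and `G ∖ {1}`. -/
def IsTrivial (A : SchurRing G) : Prop :=
  A.basicSets ⊆ {{(1 : G)}, {(1 : G)}ᶜ}

/-- `𝒜 = 𝒜_H ⊗ 𝒜_K`: an internal tensor product decomposition of `𝒜`
with respect to the internal direct product `G = H × K`. -/
def IsTensorDecomp (A : SchurRing G) (H K : Subgroup G) : Prop :=
  A.IsASubgroup H ∧ A.IsASubgroup K ∧ H ⊓ K = ⊥ ∧ H ⊔ K = ⊤ ∧
  ∀ X ∈ A.basicSets, ∃ X₁ ∈ A.basicSets, ∃ X₂ ∈ A.basicSets,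
    X₁ ⊆ (H : Set G) ∧ X₂ ⊆ (K : Set G) ∧ X = X₁ * X₂

/-- `𝒜` is the `U/L`-wreath product: `U`, `L` are `𝒜`-subgroups, `L ⊴ G`,
`L ≤ U`, and `L ≤ rad(X)` for every basic set `X` outside `U`. -/
def IsWreathSection (A : SchurRing G) (U L : Subgroup G) : Prop :=
  A.IsASubgroup U ∧ A.IsASubgroup L ∧ L ≤ U ∧ L.Normal ∧
  ∀ X ∈ A.basicSets, ¬ X ⊆ (U : Set G) →
    ∀ g ∈ L, (g * ·) '' X = X ∧ (· * g) '' X = X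

end SchurRing

/-- A finite group is a Schur group if every S-ring over it is schurian. -/
def IsSchurGroup (G : Type*) [Group G] [Fintype G] : Prop :=
  ∀ A : SchurRing G, A.IsSchurian

/-- A Cayley isomorphism between S-rings: a group isomorphism mapping the
basic sets of `𝒜` onto the basic sets of `𝒜'`. -/
def IsCayleyIso {G G' : Type*} [Group G] [Fintype G] [Group G'] [Fintype G']
    (A : SchurRing G) (A' : SchurRing G') (f : G ≃* G') : Prop :=
  (fun X : Set G => ⇑f '' X) '' A.basicSets = A'.basicSets

/-!
The structure constants of an S-ring `A` over `V × C` provide, for `x` and `y` in one basic set, a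
permutation `π` of `V × C` such that `t` and `π t`, and also `t⁻¹ x` and `(π t)⁻¹ y`, always lie
in common basic sets. If `A` is dense and `C` has prime order `p`, then raising second coordinates
to powers respects basic sets: for `p ≠ 3` by Schur's theorem on multipliers, for `p = 3` because
`C` has only two nontrivial elements.

Consequently one may average over the `p + 1` lines through a point `(z, z)` of `C × C`: this
isolates the contribution of `V × {z}` to the structure constants, so that whenever `(a, z)` and
`(b, w)` lie in one basic set, the partitions which `A` induces on `V × {z}` and on `V × {w}` have
the same structure constants. For `V = 𝔽₃²` such an algebraic isomorphism is always induced by a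
linear map, which can moreover be chosen to take `a` to `b`. Combined with the power map of `C`
that takes `z` to `w`, for `z ≠ 1` it is an automorphism of `V × C` preserving every basic set;
pairs with `z = w = 1` are moved off `V × 1` first, as `(a, u)` shares its basic set with some
`(b, v)`.
-/

open scoped Finset

lemma exists_equiv_of_card_fiber_eq {α β γ : Type*} [Fintype α] [Fintype β] [DecidableEq γ]
    {f : α → γ} {g : β → γ} (h : ∀ c, #{a | f a = c} = #{b | g b = c}) :
    ∃ σ : α ≃ β, ∀ a, g (σ a) = f a := by
  have hfib (c : γ) : Nonempty ({a // f a = c} ≃ {b // g b = c}) :=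
    Fintype.card_eq.1 (by simpa only [Fintype.card_subtype] using h c)
  exact ⟨Equiv.ofFiberEquiv fun c => (hfib c).some, Equiv.ofFiberEquiv_map _⟩

lemma coeff_mul_eq_sum {k G : Type*} [Group G] [Fintype G] [Semiring k]
    (f g : MonoidAlgebra k G) (x : G) :
    (f * g).coeff x = ∑ t, f.coeff t * g.coeff (t⁻¹ * x) := by
  rw [MonoidAlgebra.coeff_mul_apply_left, Finsupp.sum_fintype _ _ fun _ => zero_mul _]

lemma exists_coprime_pow_pow_eq_self {G : Type*} [Group G] [Finite G] {m : ℕ}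
    (hm : (Nat.card G).Coprime m) :
    ∃ m', (Nat.card G).Coprime m' ∧ ∀ t : G, (t ^ m) ^ m' = t := by
  obtain ⟨k, hk⟩ := Nat.exists_eq_add_one.2 (Nat.totient_pos.2 (Nat.card_pos (α := G)))
  refine ⟨m ^ k, hm.pow_right k, fun t => ?_⟩
  rw [← pow_mul, ← pow_succ', ← hk, ← pow_mod_natCard, Nat.ModEq.pow_totient hm.symm,
    pow_mod_natCard, pow_one]

namespace SchurRing

variable {G : Type*} [Group G] [Fintype G] {A : SchurRing G} {x y : G}

lemma eq_of_mem_of_mem {X Y : Set G} (hX : X ∈ A.basicSets) (hY : Y ∈ A.basicSets)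
    (hxX : x ∈ X) (hxY : x ∈ Y) : X = Y := by
  by_contra hne
  exact (A.disjoint' X hX Y hY hne).le ⟨hxX, hxY⟩

/-- The equivalence relation whose classes are the basic sets of `A`. -/
def rel (A : SchurRing G) : Setoid G where
  r x y := ∃ X ∈ A.basicSets, x ∈ X ∧ y ∈ X
  iseqv := {
    refl x := let ⟨X, hX, hx⟩ := A.cover x; ⟨X, hX, hx, hx⟩
    symm := fun ⟨X, hX, hx, hy⟩ => ⟨X, hX, hy, hx⟩
    trans := by
      rintro x y z ⟨X, hX, hx, hy⟩ ⟨Y, hY, hy', hz⟩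
      obtain rfl := eq_of_mem_of_mem hX hY hy hy'
      exact ⟨X, hX, hx, hz⟩ }

lemma mem_iff_of_rel {X : Set G} (hX : X ∈ A.basicSets) (h : A.rel x y) : x ∈ X ↔ y ∈ X := by
  obtain ⟨Y, hY, hx, hy⟩ := h
  exact ⟨fun hxX => eq_of_mem_of_mem hX hY hxX hx ▸ hy,
    fun hyX => eq_of_mem_of_mem hX hY hyX hy ▸ hx⟩

lemma IsASet.mem_iff {S : Set G} (hS : A.IsASet S) (h : A.rel x y) : x ∈ S ↔ y ∈ S := by
  obtain ⟨T, hT, rfl⟩ := hS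
  simp only [Set.mem_sUnion]
  exact exists_congr fun X => and_congr_right fun hX => mem_iff_of_rel (hT hX) h

lemma rel_inv (h : A.rel x y) : A.rel x⁻¹ y⁻¹ := by
  obtain ⟨X, hX, hx, hy⟩ := h
  exact ⟨X⁻¹, A.inv_mem X hX, by simpa, by simpa⟩

lemma coeff_grpSum (X : Set G) (x : G) : (grpSum X).coeff x = X.indicator 1 x := by
  classical
  simp [grpSum, Set.indicator_apply, Finsupp.finsetSum_apply, MonoidAlgebra.coeff_sum,
    Finsupp.single_apply, ← Finset.sum_filter]

lemma coeff_grpSum_mul (X Y : Set G) [DecidablePred (· ∈ X)] [DecidablePred (· ∈ Y)] (x : G) :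
    (grpSum X * grpSum Y).coeff x = #{t | t ∈ X ∧ t⁻¹ * x ∈ Y} := by
  simp [coeff_mul_eq_sum, coeff_grpSum, Set.indicator_apply, ← ite_and, and_comm]

lemma coeff_eq_of_mem_span {v : MonoidAlgebra ℤ G}
    (hv : v ∈ Submodule.span ℤ (grpSum '' A.basicSets)) (h : A.rel x y) :
    v.coeff x = v.coeff y := by
  classical
  induction hv using Submodule.span_induction with
  | mem v hv =>
    obtain ⟨X, hX, rfl⟩ := hv
    simp only [coeff_grpSum, Set.indicator_apply, mem_iff_of_rel hX h, Pi.one_apply]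
  | zero => rfl
  | add v w _ _ hv hw => simp only [MonoidAlgebra.coeff_add, Finsupp.add_apply, hv, hw]
  | smul c v _ hv => simp only [MonoidAlgebra.coeff_smul, Finsupp.smul_apply, hv]

lemma exists_mem_basicSets_iff (A : SchurRing G) (C : Quotient A.rel) :
    ∃ X ∈ A.basicSets, ∀ t, (⟦t⟧ : Quotient A.rel) = C ↔ t ∈ X := by
  induction C using Quotient.inductionOn with | h c =>
  obtain ⟨X, hX, hc⟩ := A.cover c
  refine ⟨X, hX, fun t => Quotient.eq.trans ⟨fun h => (mem_iff_of_rel hX h).2 hc, fun ht => ?_⟩⟩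
  exact ⟨X, hX, ht, hc⟩

-- The structure constants of `A` say that the map `t ↦ (⟦t⟧, ⟦t⁻¹ * x⟧)` has the same fibre
-- cardinalities for all `x` in a basic set.
theorem exists_perm (h : A.rel x y) :
    ∃ π : Equiv.Perm G, ∀ t, A.rel t (π t) ∧ A.rel (t⁻¹ * x) ((π t)⁻¹ * y) := by
  classical
  let cls (t : G) : Quotient A.rel := ⟦t⟧
  obtain ⟨π, hπ⟩ := exists_equiv_of_card_fiber_eq (f := fun t => (cls t, cls (t⁻¹ * x)))
    (g := fun t => (cls t, cls (t⁻¹ * y))) <| by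
      rintro ⟨C, D⟩
      obtain ⟨X, hX, hC⟩ := A.exists_mem_basicSets_iff C
      obtain ⟨Y, hY, hD⟩ := A.exists_mem_basicSets_iff D
      simp only [cls, Prod.mk.injEq, hC, hD]
      have := coeff_eq_of_mem_span (A.mul_mem X hX Y hY) h
      rw [coeff_grpSum_mul, coeff_grpSum_mul] at this
      exact_mod_cast this
  exact ⟨π, fun t => ⟨Quotient.exact (congrArg Prod.fst (hπ t)).symm,
    Quotient.exact (congrArg Prod.snd (hπ t)).symm⟩⟩

/-- A function on `G` that is constant on the basic sets of `A`; the ones with values in a ring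
are the coefficient functions of the elements of `A`. -/
def IsClassFun {k : Type*} (A : SchurRing G) (f : G → k) : Prop :=
  ∀ ⦃x y⦄, A.rel x y → f x = f y

lemma IsClassFun.conv {k : Type*} [NonUnitalNonAssocSemiring k] {f g : G → k}
    (hf : A.IsClassFun f) (hg : A.IsClassFun g) :
    A.IsClassFun fun x => ∑ t, f t * g (t⁻¹ * x) := by
  intro x y h
  obtain ⟨π, hπ⟩ := exists_perm h
  refine Eq.trans ?_ (Equiv.sum_comp π fun t => f t * g (t⁻¹ * y))
  exact Finset.sum_congr rfl fun t _ => by rw [hf (hπ t).1, hg (hπ t).2]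

lemma isClassFun_coeff_pow {k : Type*} [Semiring k] {f : MonoidAlgebra k G}
    (hf : A.IsClassFun f.coeff) : ∀ n ≠ 0, A.IsClassFun (f ^ n).coeff
  | 1, _ => by rwa [pow_one]
  | n + 2, _ => by
    have := (isClassFun_coeff_pow hf (n + 1) n.succ_ne_zero).conv hf
    simpa only [pow_succ f (n + 1), IsClassFun, coeff_mul_eq_sum] using this

/-- The automorphisms of `G` mapping every basic set of `A` to itself. -/
def automorphismGroup (A : SchurRing G) : Subgroup (MulAut G) where
  carrier := {m | ∀ x, A.rel x (m x)}
  one_mem' := A.rel.refl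
  mul_mem' hm hn x := A.rel.trans (hn x) (hm _)
  inv_mem' {m} hm x := A.rel.symm (by simpa using hm (m⁻¹ x))

theorem isCyclotomic_of_transitive (A : SchurRing G)
    (h : ∀ x y, A.rel x y → ∃ m ∈ A.automorphismGroup, m x = y) : A.IsCyclotomic := by
  have orbit_eq {X : Set G} (hX : X ∈ A.basicSets) {x : G} (hx : x ∈ X) :
      MulAction.orbit A.automorphismGroup x = X := by
    ext y
    constructor
    · rintro ⟨m, rfl⟩
      exact (mem_iff_of_rel hX (m.2 x)).1 hx
    · intro hy
      obtain ⟨m, hm, rfl⟩ := h x y ⟨X, hX, hx, hy⟩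
      exact ⟨⟨m, hm⟩, rfl⟩
  refine ⟨A.automorphismGroup, Set.ext fun X => ⟨fun hX => ?_, ?_⟩⟩
  · obtain ⟨x, hx⟩ := A.nonempty_mem X hX
    exact ⟨x, orbit_eq hX hx⟩
  · rintro ⟨x, rfl⟩
    obtain ⟨X, hX, hx⟩ := A.cover x
    simpa only [orbit_eq hX hx] using hX

/-! ### Schur's theorem on multipliers -/

section Multipliers

variable {G : Type*} [CommGroup G] [Fintype G] {A : SchurRing G} {x y : G}

-- Over a field of characteristic `q` the `q`-th power of a sum `∑ t` is `∑ t ^ q`.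
lemma rel_of_rel_pow_prime {q : ℕ} (hq : q.Prime) (hcop : (Nat.card G).Coprime q)
    (h : A.rel (x ^ q) (y ^ q)) : A.rel x y := by
  classical
  have := Fact.mk hq
  have pow_injective : Function.Injective (· ^ q : G → G) := (powCoprime hcop).injective
  let F : MonoidAlgebra (ZMod q) G := ∑ t with A.rel x t, MonoidAlgebra.single t 1
  have hchar : CharP (MonoidAlgebra (ZMod q) G) q :=
    charP_of_injective_algebraMap (algebraMap (ZMod q) _).injective q
  have hF (t : G) : F.coeff t = if A.rel x t then 1 else 0 := by
    simp [F, MonoidAlgebra.coeff_sum, Finsupp.finsetSum_apply, Finsupp.single_apply]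
  have hFq (t : G) : (F ^ q).coeff (t ^ q) = if A.rel x t then 1 else 0 := by
    rw [sum_pow_char]
    simp [MonoidAlgebra.single_pow, MonoidAlgebra.coeff_sum,
      Finsupp.finsetSum_apply, Finsupp.single_apply, pow_injective.eq_iff]
  have hclass : A.IsClassFun F.coeff := fun s t hst => by
    simp only [hF, show A.rel x s ↔ A.rel x t from
      ⟨fun h => A.rel.trans h hst, fun h => A.rel.trans h (A.rel.symm hst)⟩]
  have := isClassFun_coeff_pow hclass q hq.ne_zero h
  rw [hFq, hFq, if_pos (A.rel.refl x)] at this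
  by_contra hxy
  rw [if_neg hxy] at this
  exact one_ne_zero this

lemma rel_of_rel_pow {m : ℕ} (hm : (Nat.card G).Coprime m) (h : A.rel (x ^ m) (y ^ m)) :
    A.rel x y := by
  induction m using Nat.recOnMul generalizing x y with
  | zero =>
    have := (Nat.card_eq_one_iff_unique.1 ((Nat.coprime_zero_right _).1 hm)).1
    rw [Subsingleton.elim x y]
  | one => simpa using h
  | prime q hq => exact rel_of_rel_pow_prime hq hm h
  | mul m n ihm ihn =>
    rw [pow_mul, pow_mul] at h
    exact ihm hm.coprime_mul_right_right (ihn hm.coprime_mul_left_right h)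

theorem rel_pow {m : ℕ} (hm : (Nat.card G).Coprime m) (h : A.rel x y) :
    A.rel (x ^ m) (y ^ m) := by
  obtain ⟨m', hm', hpow⟩ := exists_coprime_pow_pow_eq_self hm
  exact rel_of_rel_pow hm' (by rwa [hpow, hpow])

end Multipliers

/-! ### Dense S-rings over direct products -/

section Dense

variable {V C : Type*} [Group V] [Group C] [Fintype V] [Fintype C] {A : SchurRing (V × C)}
  {x y : V × C} {a b : V} {z w : C}

/-- An S-ring over a direct product is dense if both factors are `A`-subgroups. -/
structure IsDense (A : SchurRing (V × C)) : Prop where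
  left : A.IsASubgroup ((⊤ : Subgroup V).prod (⊥ : Subgroup C))
  right : A.IsASubgroup ((⊥ : Subgroup V).prod (⊤ : Subgroup C))

namespace IsDense

lemma snd_eq_one_iff (hA : A.IsDense) (h : A.rel x y) : x.2 = 1 ↔ y.2 = 1 := by
  simpa [Subgroup.mem_prod] using hA.left.mem_iff h

lemma fst_eq_one_iff (hA : A.IsDense) (h : A.rel x y) : x.1 = 1 ↔ y.1 = 1 := by
  simpa [Subgroup.mem_prod] using hA.right.mem_iff h

lemma rel_fst (hA : A.IsDense) (h : A.rel x y) : A.rel (x.1, 1) (y.1, 1) := by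
  obtain ⟨π, hπ⟩ := exists_perm h
  obtain ⟨h₁, h₂⟩ := hπ (x.1, 1)
  have hsnd : (π (x.1, 1)).2 = 1 := (hA.snd_eq_one_iff h₁).1 rfl
  have hfst : (π (x.1, 1)).1 = y.1 :=
    inv_mul_eq_one.1 ((hA.fst_eq_one_iff h₂).1 (inv_mul_cancel x.1))
  rwa [show π (x.1, 1) = (y.1, 1) from Prod.ext hfst hsnd] at h₁

lemma rel_snd (hA : A.IsDense) (h : A.rel x y) : A.rel (1, x.2) (1, y.2) := by
  obtain ⟨π, hπ⟩ := exists_perm h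
  obtain ⟨h₁, h₂⟩ := hπ (1, x.2)
  have hfst : (π (1, x.2)).1 = 1 := (hA.fst_eq_one_iff h₁).1 rfl
  have hsnd : (π (1, x.2)).2 = y.2 :=
    inv_mul_eq_one.1 ((hA.snd_eq_one_iff h₂).1 (inv_mul_cancel x.2))
  rwa [show π (1, x.2) = (1, y.2) from Prod.ext hfst hsnd] at h₁

lemma exists_perm_snd (hA : A.IsDense) (h : A.rel (a, z) (b, w)) :
    ∃ σ : Equiv.Perm C, ∀ u, A.rel (a, u) (b, σ u) := by
  obtain ⟨π, hπ⟩ := exists_perm (hA.rel_fst h)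
  have fst_eq (u : C) : (π (a, u)).1 = b :=
    inv_mul_eq_one.1 ((hA.fst_eq_one_iff (hπ (a, u)).2).1 (inv_mul_cancel a))
  have eq_mk (u : C) : π (a, u) = (b, (π (a, u)).2) := Prod.ext (fst_eq u) rfl
  have hinj : Function.Injective fun u => (π (a, u)).2 := fun u v huv =>
    congrArg Prod.snd (π.injective ((eq_mk u).trans ((congrArg (b, ·) huv).trans (eq_mk v).symm)))
  exact ⟨Equiv.ofBijective _ (Finite.injective_iff_bijective.1 hinj),
    fun u => eq_mk u ▸ (hπ (a, u)).1⟩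

end IsDense

/-- The maps `(a, z) ↦ (a, z ^ m)` respect the partition into basic sets. For `V` and `C` of coprime
orders this is an instance of Schur's theorem on multipliers. -/
def IsSndPowInvariant (A : SchurRing (V × C)) : Prop :=
  ∀ ⦃a b z w⦄ (m : ℕ), A.rel (a, z) (b, w) → A.rel (a, z ^ m) (b, w ^ m)

end Dense

section PowInvariant

variable {V C : Type*} [CommGroup V] [CommGroup C] [Fintype V] [Fintype C] {A : SchurRing (V × C)}
  {a b : V} {z w : C}

lemma IsDense.isSndPowInvariant_of_coprime (hA : A.IsDense) (hC : (Nat.card C).Prime)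
    (hVC : (Nat.card V).Coprime (Nat.card C)) : A.IsSndPowInvariant := by
  intro a b z w m h
  by_cases hm : Nat.card C ∣ m
  · have pow_eq_one (u : C) : u ^ m = 1 :=
      orderOf_dvd_iff_pow_eq_one.1 ((orderOf_dvd_natCard u).trans hm)
    simpa only [pow_eq_one] using hA.rel_fst h
  · obtain ⟨m', hV', hC'⟩ := Nat.chineseRemainder hVC 1 m
    have hcop : (Nat.card (V × C)).Coprime m' := by
      rw [Nat.card_prod]
      exact (Nat.Coprime.mul_right (hV'.gcd_eq.trans (Nat.gcd_one_left _))
        (hC'.gcd_eq.trans ((hC.coprime_iff_not_dvd.2 hm).symm))).symm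
    have pow_eq (c : V) (u : C) : (c, u) ^ m' = (c, u ^ m) := by
      ext
      · exact (pow_eq_pow_iff_modEq.2 (hV'.of_dvd (orderOf_dvd_natCard c))).trans (pow_one c)
      · exact pow_eq_pow_iff_modEq.2 (hC'.of_dvd (orderOf_dvd_natCard u))
    simpa only [pow_eq] using rel_pow hcop h

end PowInvariant

section CardThree

variable {V C : Type*} [Group V] [Group C] [Fintype V] [Fintype C] {A : SchurRing (V × C)}
  {a b : V} {z w : C}

lemma IsDense.rel_sq_of_card_eq_three (hA : A.IsDense) (hC : Nat.card C = 3)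
    (h : A.rel (a, z) (b, w)) : A.rel (a, z ^ 2) (b, w ^ 2) := by
  have hone : z = 1 ↔ w = 1 := hA.snd_eq_one_iff h
  by_cases hw : w = 1
  · simpa only [hw, hone.2 hw, one_pow] using h
  have := Fact.mk Nat.prime_three
  obtain ⟨σ, hσ⟩ := hA.exists_perm_snd h
  have sq_ne_one : z ^ 2 ≠ 1 := fun h2 => hw <| hone.1 <|
    orderOf_eq_one_iff.1 <| Nat.eq_one_of_dvd_coprimes (by norm_num : Nat.Coprime 2 3)
      (orderOf_dvd_of_pow_eq_one h2) (hC ▸ orderOf_dvd_natCard z)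
  have eq_of_ne {u : C} (hu : u ≠ 1) (huw : u ≠ w) : u = w ^ 2 := by
    obtain ⟨n, rfl⟩ := mem_powers_of_prime_card hC hw (g' := u)
    simp only [← pow_mod_natCard w n, hC] at hu huw ⊢
    have : n % 3 < 3 := Nat.mod_lt _ (by norm_num)
    interval_cases n % 3 <;> simp_all
  have σ_ne_one {u : C} (hu : u ≠ 1) : σ u ≠ 1 := mt (hA.snd_eq_one_iff (hσ u)).2 hu
  by_cases hσw : σ (z ^ 2) = w
  · have hσz : σ z = w ^ 2 := eq_of_ne (σ_ne_one (mt hone.1 hw)) fun hσz => hw <| hone.1 <| by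
      simpa [sq] using σ.injective (hσw.trans hσz.symm)
    have hsq := hσ (z ^ 2)
    rw [hσw] at hsq
    exact A.rel.trans hsq (A.rel.trans (A.rel.symm h) (hσz ▸ hσ z))
  · exact eq_of_ne (σ_ne_one sq_ne_one) hσw ▸ hσ (z ^ 2)

lemma IsDense.isSndPowInvariant_of_card_eq_three (hA : A.IsDense) (hC : Nat.card C = 3) :
    A.IsSndPowInvariant := by
  intro a b z w m h
  rw [← pow_mod_natCard z, ← pow_mod_natCard w, hC]
  have : m % 3 < 3 := Nat.mod_lt _ (by norm_num)
  interval_cases m % 3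
  · simpa only [pow_zero] using hA.rel_fst h
  · simpa only [pow_one] using h
  · exact hA.rel_sq_of_card_eq_three hC h

end CardThree

/-! ### Fibres of a dense S-ring -/

section Fibers

variable {V C : Type*} [Group V] [Group C] [Fintype V] [Fintype C] [DecidableEq C]
  {A : SchurRing (V × C)} {a b : V} {z w : C}

/-- The push-forward of `f` along `(x, j) ↦ (x, j ^ t)`. -/
def mapSndPow {V C k : Type*} [Group C] [Fintype C] [DecidableEq C] [AddCommMonoid k] (t : ℕ)
    (f : V × C → k) (r : V × C) : k :=
  ∑ j, if j ^ t = r.2 then f (r.1, j) else 0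

/-- The convolution over `V` of the restrictions of `f` and `g` to the fibres over `i` and `j`. -/
def fiberConv {V C k : Type*} [Group V] [Fintype V] [NonUnitalNonAssocSemiring k]
    (f g : V × C → k) (a : V) (i j : C) : k :=
  ∑ x, f (x, i) * g (x⁻¹ * a, j)

lemma IsClassFun.mapSndPow {k : Type*} [AddCommMonoid k] {f : V × C → k} (hf : A.IsClassFun f)
    (hA : A.IsDense) (hC : (Nat.card C).Prime) (hpow : A.IsSndPowInvariant) (t : ℕ) :
    A.IsClassFun (mapSndPow t f) := by
  rintro ⟨a, y⟩ ⟨b, y'⟩ h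
  by_cases ht : Nat.card C ∣ t
  · have pow_eq_one (u : C) : u ^ t = 1 :=
      orderOf_dvd_iff_pow_eq_one.1 ((orderOf_dvd_natCard u).trans ht)
    obtain ⟨σ, hσ⟩ := hA.exists_perm_snd h
    have hone : 1 = y ↔ 1 = y' := by simpa only [eq_comm] using hA.snd_eq_one_iff h
    simp only [SchurRing.mapSndPow, pow_eq_one, hone]
    refine Eq.trans ?_ (Equiv.sum_comp σ fun j => if 1 = y' then f (b, j) else 0)
    exact Finset.sum_congr rfl fun j _ => by rw [hf (hσ j)]
  · obtain ⟨t', -, ht'⟩ := exists_coprime_pow_pow_eq_self (G := C) (hC.coprime_iff_not_dvd.2 ht)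
    have eq_iff (j u : C) : j ^ t = u ↔ j = u ^ t' :=
      ⟨fun h => by rw [← h, ht'], fun h => by rw [h, ← pow_mul, mul_comm, pow_mul, ht']⟩
    simpa only [SchurRing.mapSndPow, eq_iff, Finset.sum_ite_eq', Finset.mem_univ, if_true]
      using hf (hpow t' h)

lemma sum_mapSndPow_mul_mapSndPow {k : Type*} [NonUnitalNonAssocSemiring k] (f g : V × C → k)
    (s t : ℕ) (r : V × C) :
    ∑ q, mapSndPow s f q * mapSndPow t g (q⁻¹ * r)
      = ∑ i, ∑ j, if i ^ s * j ^ t = r.2 then fiberConv f g r.1 i j else 0 := by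
  have hfiber (x : V) : ∑ v, mapSndPow s f (x, v) * mapSndPow t g (x⁻¹ * r.1, v⁻¹ * r.2)
      = ∑ i, ∑ j, if i ^ s * j ^ t = r.2 then f (x, i) * g (x⁻¹ * r.1, j) else 0 := by
    simp only [mapSndPow, Finset.sum_mul, ite_mul, zero_mul]
    rw [Finset.sum_comm]
    refine Finset.sum_congr rfl fun i _ => ?_
    simp [Finset.mul_sum, eq_inv_mul_iff_mul_eq]
  simp only [Fintype.sum_prod_type, Prod.inv_mk, Prod.mul_def, hfiber]
  rw [Finset.sum_comm]
  refine Finset.sum_congr rfl fun i _ => ?_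
  rw [Finset.sum_comm]
  refine Finset.sum_congr rfl fun j _ => ?_
  rw [fiberConv, Finset.ite_sum_zero]

end Fibers

section Lines

lemma card_pow_eq {C : Type*} [Group C] [DecidableEq C] {p : ℕ} [Fact p.Prime]
    (hC : Nat.card C = p) {y : C} (hy : y ≠ 1) (u : C) :
    #{t ∈ Finset.range p | y ^ t = u} = 1 := by
  obtain ⟨n, rfl⟩ := mem_powers_of_prime_card hC hy (g' := u)
  have hord : orderOf y = p := orderOf_eq_prime (hC ▸ pow_card_eq_one') hy
  refine Finset.card_eq_one.2 ⟨n % p, ?_⟩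
  ext t
  simp only [Finset.mem_filter, Finset.mem_range, Finset.mem_singleton, pow_eq_pow_iff_modEq, hord]
  refine ⟨fun ⟨htp, ht⟩ => (Nat.mod_eq_of_lt htp).symm.trans ht, ?_⟩
  rintro rfl
  exact ⟨Nat.mod_lt _ (Fact.out : p.Prime).pos, Nat.mod_modEq _ _⟩

variable {C : Type*} [CommGroup C] [DecidableEq C]

-- Every point of `C × C` other than `(z, z)` lies on exactly one of the `p + 1` lines
-- `i * j ^ t = z ^ (1 + t)` and `j = z` through `(z, z)`.
lemma card_lines_through {p : ℕ} [Fact p.Prime] (hC : Nat.card C = p) (z i j : C) :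
    #{t ∈ Finset.range p | i * j ^ t = z ^ (1 + t)} + (if j = z then 1 else 0)
      = 1 + if i = z ∧ j = z then p else 0 := by
  have line_iff (t : ℕ) : i * j ^ t = z ^ (1 + t) ↔ (z / j) ^ t = i / z := by
    rw [div_pow, div_eq_div_iff_mul_eq_mul, pow_add, pow_one, mul_comm z, eq_comm]
  simp only [line_iff]
  by_cases hj : j = z
  · by_cases hi : i = z
    · simp [hi, hj, add_comm]
    · have : 1 ≠ i / z := fun h => hi (div_eq_one.1 h.symm)
      simp [hi, hj, this]
  · simp [hj, card_pow_eq hC (div_ne_one.2 (Ne.symm hj))]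

lemma sum_lines_through [Fintype C] {p : ℕ} [Fact p.Prime] (hC : Nat.card C = p) {k : Type*}
    [AddCommMonoid k] (N : C → C → k) (z : C) :
    (∑ t ∈ Finset.range p, ∑ i, ∑ j, if i * j ^ t = z ^ (1 + t) then N i j else 0)
        + (∑ i, ∑ j, if j = z then N i j else 0)
      = (∑ i, ∑ j, N i j) + p • N z z := by
  have hpoint (i j : C) :
      (∑ t ∈ Finset.range p, if i * j ^ t = z ^ (1 + t) then N i j else 0)
          + (if j = z then N i j else 0)
        = N i j + if i = z ∧ j = z then p • N i j else 0 := by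
    have := congrArg (· • N i j) (card_lines_through hC z i j)
    simpa [add_smul, ite_smul, ← Finset.sum_filter] using this
  rw [Finset.sum_comm, ← Finset.sum_add_distrib]
  simp_rw [Finset.sum_comm (s := Finset.range p), ← Finset.sum_add_distrib, hpoint,
    Finset.sum_add_distrib, ite_and]
  simp

end Lines

section Fibers

variable {V C : Type*} [Group V] [CommGroup C] [Fintype V] [Fintype C] {A : SchurRing (V × C)}
  {a b : V} {z w : C}

theorem IsClassFun.fiberConv_eq {k : Type*} [NonUnitalNonAssocRing k] [IsAddTorsionFree k]
    {f g : V × C → k} (hf : A.IsClassFun f) (hg : A.IsClassFun g) (hA : A.IsDense)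
    (hC : (Nat.card C).Prime) (hpow : A.IsSndPowInvariant) (h : A.rel (a, z) (b, w)) :
    fiberConv f g a z z = fiberConv f g b w w := by
  classical
  have := Fact.mk hC
  have hline (s t : ℕ) :
      (∑ i, ∑ j, if i ^ s * j ^ t = z ^ (s + t) then fiberConv f g a i j else 0)
        = ∑ i, ∑ j, if i ^ s * j ^ t = w ^ (s + t) then fiberConv f g b i j else 0 := by
    have := (hf.mapSndPow hA hC hpow s).conv (hg.mapSndPow hA hC hpow t) (hpow (s + t) h)
    simpa only [sum_mapSndPow_mul_mapSndPow] using this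
  have hsum := congrArg₂ (· + ·)
    (Finset.sum_congr (rfl : Finset.range (Nat.card C) = _) fun t _ => hline 1 t) (hline 0 1)
  have htotal := hline 0 0
  simp only [pow_one, pow_zero, one_mul, zero_add, mul_one, if_true] at hsum htotal
  rw [sum_lines_through rfl, sum_lines_through rfl, htotal, add_right_inj] at hsum
  exact IsAddTorsionFree.nsmul_right_injective hC.ne_zero hsum

theorem exists_perm_fiber (hA : A.IsDense) (hC : (Nat.card C).Prime) (hpow : A.IsSndPowInvariant)
    (h : A.rel (a, z) (b, w)) :
    ∃ π : Equiv.Perm V, ∀ x, A.rel (x, z) (π x, w) ∧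
      A.rel (x⁻¹ * a, z) ((π x)⁻¹ * b, w) := by
  classical
  let cls (t : V × C) : Quotient A.rel := ⟦t⟧
  have hclass (X : Quotient A.rel) : A.IsClassFun fun t => if cls t = X then (1 : ℤ) else 0 :=
    fun s t hst => by simp only [cls, Quotient.sound hst]
  obtain ⟨π, hπ⟩ := exists_equiv_of_card_fiber_eq (f := fun x => (cls (x, z), cls (x⁻¹ * a, z)))
    (g := fun x => (cls (x, w), cls (x⁻¹ * b, w))) <| by
      rintro ⟨X, Y⟩
      have := (hclass X).fiberConv_eq (hclass Y) hA hC hpow h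
      simpa [fiberConv, ← ite_and, and_comm] using this
  exact ⟨π, fun x => ⟨Quotient.exact (congrArg Prod.fst (hπ x)).symm,
    Quotient.exact (congrArg Prod.snd (hπ x)).symm⟩⟩

end Fibers

end SchurRing

/-! ### Algebraic isomorphisms over the plane of order nine -/

section Plane

variable {V : Type*} [AddCommGroup V]

lemma exists_linearEquiv_of_linearIndependent_pair {K : Type*} [Field K] [Module K V]
    (hV : Module.finrank K V = 2) {s a : V} (h : LinearIndependent K ![s, a]) :
    ∃ e : (K × K) ≃ₗ[K] V, ∀ i j, e (i, j) = i • s + j • a := by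
  let B := basisOfLinearIndependentOfCardEqFinrank h (by rw [hV, Fintype.card_fin])
  refine ⟨(LinearEquiv.finTwoArrow K K).symm.trans B.equivFun.symm, fun i j => ?_⟩
  simp [B, Module.Basis.equivFun_symm_apply]

lemma zmod_three_cases (i : ZMod 3) : i = 0 ∨ i = 1 ∨ i = -1 := by
  decide +revert

variable [Module (ZMod 3) V]

lemma eq_of_linearIndependent_pair (hV : Module.finrank (ZMod 3) V = 2) {s a : V}
    (h : LinearIndependent (ZMod 3) ![s, a]) (y : V) :
    (y = 0 ∨ y = s ∨ y = -s) ∨ (y = a ∨ y = s + a ∨ y = -s + a) ∨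
      (y = -a ∨ y = s + -a ∨ y = -s + -a) := by
  obtain ⟨e, he⟩ := exists_linearEquiv_of_linearIndependent_pair hV h
  obtain ⟨⟨i, j⟩, rfl⟩ := e.surjective y
  rcases zmod_three_cases i with rfl | rfl | rfl <;>
    rcases zmod_three_cases j with rfl | rfl | rfl <;> simp [he]

lemma sum_eq_of_neg_eq {M : Type*} [AddCommMonoid M] [Fintype V]
    (hV : Module.finrank (ZMod 3) V = 2) {s a : V} (h : LinearIndependent (ZMod 3) ![s, a])
    {F : V → M} (hF : ∀ x, F (-x) = F x) :
    ∑ x, F x = F 0 + 2 • F s + 2 • ∑ i : ZMod 3, F (a + i • s) := by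
  obtain ⟨e, he⟩ := exists_linearEquiv_of_linearIndependent_pair hV h
  have sum_zmod (f : ZMod 3 → M) : ∑ i, f i = f 0 + f 1 + f (-1) := Fin.sum_univ_three f
  rw [← Equiv.sum_comp e.toEquiv, Fintype.sum_prod_type]
  simp only [sum_zmod, LinearEquiv.coe_toEquiv, he, zero_smul, one_smul, neg_smul, zero_add,
    add_zero]
  rw [← hF (-s), ← hF (-a), ← hF (s + -a), ← hF (-s + -a)]
  simp only [neg_neg, neg_add, add_comm]
  abel

lemma add_self_eq_neg_of_zmod_three (x : V) : x + x = -x := by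
  have h3 : (3 : ℕ) • x = 0 := ZModModule.char_nsmul_eq_zero 3 x
  grind

lemma neg_add_eq_add_neg_sub_of_zmod_three (x y : V) : -(x + y) = x + -(y - x) := by
  rw [neg_sub, ← add_sub_assoc, add_self_eq_neg_of_zmod_three, neg_add']

lemma exists_affine_of_perm_zmod_three (σ : Equiv.Perm (ZMod 3)) :
    ∃ k, (∀ i, σ i = k + i) ∨ ∀ i, σ i = k - i := by
  decide +revert

end Plane

/-- Two colourings of `V` have the same structure constants, colours being matched by equality: this
is how an algebraic isomorphism of two S-rings over `V` relates their basic sets. -/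
structure ColorIso {V ι : Type*} [AddGroup V] (c c' : V → ι) : Prop where
  map_zero : c 0 = c' 0
  eq_zero_iff : ∀ {a b}, c a = c' b → (a = 0 ↔ b = 0)
  map_neg : ∀ {a b}, c a = c' b → c (-a) = c' (-b)
  exists_perm : ∀ {a b}, c a = c' b →
    ∃ π : Equiv.Perm V, ∀ x, c x = c' (π x) ∧ c (a - x) = c' (b - π x)

/-- The point `s` is alone in its colour class. -/
def IsSolitary {V ι : Type*} (c : V → ι) (s : V) : Prop :=
  ∀ ⦃y⦄, c y = c s → y = s

namespace ColorIso

section AddGroup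

variable {V ι : Type*} [AddGroup V] {c c' : V → ι} {s s' a b : V}

lemma symm (H : ColorIso c c') : ColorIso c' c where
  map_zero := H.map_zero.symm
  eq_zero_iff h := (H.eq_zero_iff h.symm).symm
  map_neg h := (H.map_neg h.symm).symm
  exists_perm h := by
    obtain ⟨π, hπ⟩ := H.exists_perm h.symm
    refine ⟨π.symm, fun x => ?_⟩
    simpa only [Equiv.apply_symm_apply, eq_comm] using hπ (π.symm x)

lemma exists_color_perm (H : ColorIso c c') : ∃ π : Equiv.Perm V, ∀ x, c x = c' (π x) :=
  (H.exists_perm H.map_zero).imp fun _ hπ x => (hπ x).1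

lemma self (H : ColorIso c c') : ColorIso c c where
  map_zero := rfl
  eq_zero_iff {a b} h := by
    obtain ⟨π, hπ⟩ := H.exists_color_perm
    exact (H.eq_zero_iff (hπ a)).trans (H.eq_zero_iff (h.symm.trans (hπ a))).symm
  map_neg {a b} h := by
    obtain ⟨π, hπ⟩ := H.exists_color_perm
    exact (H.map_neg (hπ a)).trans (H.map_neg (h.symm.trans (hπ a))).symm
  exists_perm {a b} h := by
    obtain ⟨π, hπ⟩ := H.exists_color_perm
    obtain ⟨π₁, h₁⟩ := H.exists_perm (hπ a)
    obtain ⟨π₂, h₂⟩ := H.exists_perm (h.symm.trans (hπ a))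
    refine ⟨π₁.trans π₂.symm, fun x => ?_⟩
    have := h₂ (π₂.symm (π₁ x))
    rw [Equiv.apply_symm_apply] at this
    exact ⟨(h₁ x).1.trans this.1.symm, (h₁ x).2.trans this.2.symm⟩

lemma isSolitary_neg (H : ColorIso c c') (hs : IsSolitary c s) : IsSolitary c (-s) :=
  fun y h => neg_eq_iff_eq_neg.1 (hs (by simpa only [neg_neg] using H.self.map_neg h))

lemma isSolitary_of_color_eq (H : ColorIso c c') (h : c s = c' s') (hs : IsSolitary c s) :
    IsSolitary c' s' := by
  obtain ⟨π, hπ⟩ := H.exists_color_perm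
  have π_eq (y : V) (hy : c' y = c' s') : π s = y := by
    rw [← hs ((hπ (π.symm y)).trans (by rw [π.apply_symm_apply, hy, h])), π.apply_symm_apply]
  exact fun y hy => (π_eq y hy).symm.trans (π_eq s' rfl)

lemma color_add_eq (H : ColorIso c c') (hss' : c s = c' s') (hs : IsSolitary c s) (h : c a = c' b) :
    c (a + s) = c' (b + s') := by
  obtain ⟨π, hπ⟩ := H.exists_perm h
  have hneg : c (-s) = c' (-s') := H.map_neg hss'
  have hπs : π (-s) = -s' :=
    H.isSolitary_of_color_eq hneg (H.isSolitary_neg hs) ((hπ (-s)).1.symm.trans hneg)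
  simpa only [hπs, sub_neg_eq_add] using (hπ (-s)).2

lemma color_neg_ne {e x : V} (H : ColorIso c c) (he : c (-e) ≠ c e) (hx : c x = c e) :
    c (-x) ≠ c e := by
  rwa [H.map_neg hx]

end AddGroup

section Plane

variable {V ι : Type*} [AddCommGroup V] [Module (ZMod 3) V] {c c' : V → ι} {s s' a a' b : V}

lemma exists_linearEquiv_of_line (H : ColorIso c c') (hV : Module.finrank (ZMod 3) V = 2)
    (h : LinearIndependent (ZMod 3) ![s, a]) (h' : LinearIndependent (ZMod 3) ![s', a'])
    (hs : c s = c' s') (hline : ∀ i : ZMod 3, c (a + i • s) = c' (a' + i • s')) :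
    ∃ f : V ≃ₗ[ZMod 3] V, f s = s' ∧ f a = a' ∧ ∀ x, c x = c' (f x) := by
  obtain ⟨e, he⟩ := exists_linearEquiv_of_linearIndependent_pair hV h
  obtain ⟨e', he'⟩ := exists_linearEquiv_of_linearIndependent_pair hV h'
  have hf (i j : ZMod 3) : (e.symm.trans e') (i • s + j • a) = i • s' + j • a' := by
    rw [← he, LinearEquiv.trans_apply, e.symm_apply_apply, he']
  refine ⟨e.symm.trans e', by simpa using hf 1 0, by simpa using hf 0 1, fun x => ?_⟩
  obtain ⟨⟨i, j⟩, rfl⟩ := e.surjective x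
  rw [he, hf]
  rcases zmod_three_cases j with rfl | rfl | rfl
  · rcases zmod_three_cases i with rfl | rfl | rfl
    · simpa using H.map_zero
    · simpa using hs
    · simpa using H.map_neg hs
  · simpa [add_comm] using hline i
  · simpa using H.map_neg (hline (-i))

lemma exists_perm_line [Finite V] (H : ColorIso c c') (hV : Module.finrank (ZMod 3) V = 2)
    (hsymm : ∀ x, c (-x) = c x) (hsymm' : ∀ x, c' (-x) = c' x)
    (h : LinearIndependent (ZMod 3) ![s, a]) (h' : LinearIndependent (ZMod 3) ![s', a'])
    (hs : c s = c' s') :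
    ∃ σ : Equiv.Perm (ZMod 3), ∀ i, c (a + i • s) = c' (a' + σ i • s') := by
  classical
  have := Fintype.ofFinite V
  obtain ⟨π, hπ⟩ := H.exists_color_perm
  obtain ⟨σ, hσ⟩ := exists_equiv_of_card_fiber_eq (f := fun i : ZMod 3 => c (a + i • s))
    (g := fun i : ZMod 3 => c' (a' + i • s')) <| by
      intro X
      have hsum := sum_eq_of_neg_eq hV h (F := fun x => if c x = X then 1 else 0)
        fun x => by rw [hsymm]
      have hsum' := sum_eq_of_neg_eq hV h' (F := fun x => if c' x = X then 1 else 0)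
        fun x => by rw [hsymm']
      have htotal := Equiv.sum_comp π fun x => if c' x = X then 1 else 0
      simp only [← hπ] at htotal
      rw [H.map_zero, hs] at hsum
      simp only [Finset.card_filter, smul_eq_mul] at hsum hsum' ⊢
      lia
  exact ⟨σ, fun i => (hσ i).symm⟩

-- Permutations of `ZMod 3` are affine, hence any bijection between two lines of the plane is
-- induced by a linear map.
lemma exists_linearEquiv_of_symmetric [Finite V] (H : ColorIso c c')
    (hV : Module.finrank (ZMod 3) V = 2) (hsymm : ∀ x, c (-x) = c x) (hs0 : s ≠ 0)
    (hs : c s = c' s') : ∃ f : V ≃ₗ[ZMod 3] V, f s = s' ∧ ∀ x, c x = c' (f x) := by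
  have hsymm' (x : V) : c' (-x) = c' x := by
    obtain ⟨π, hπ⟩ := H.exists_color_perm
    have hx : c (π.symm x) = c' x := by rw [hπ, π.apply_symm_apply]
    rw [← H.map_neg hx, hsymm, hx]
  have one_lt : 1 < Module.finrank (ZMod 3) V := by rw [hV]; exact one_lt_two
  obtain ⟨a, ha⟩ := exists_linearIndependent_pair_of_one_lt_finrank one_lt hs0
  obtain ⟨b, hb⟩ := exists_linearIndependent_pair_of_one_lt_finrank one_lt
    ((H.eq_zero_iff hs).not.1 hs0)
  suffices ∃ a', LinearIndependent (ZMod 3) ![s', a'] ∧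
      ∀ i : ZMod 3, c (a + i • s) = c' (a' + i • s') by
    obtain ⟨a', ha', hline⟩ := this
    obtain ⟨f, hfs, -, hf⟩ := H.exists_linearEquiv_of_line hV ha ha' hs hline
    exact ⟨f, hfs, hf⟩
  obtain ⟨σ, hσ⟩ := H.exists_perm_line hV hsymm hsymm' ha hb hs
  obtain ⟨k, hk⟩ := exists_affine_of_perm_zmod_three σ
  have hbk : LinearIndependent (ZMod 3) ![s', b + k • s'] := by
    rwa [add_comm, LinearIndependent.pair_add_smul_right_iff]
  rcases hk with hk | hk
  · refine ⟨b + k • s', hbk, fun i => ?_⟩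
    rw [hσ, hk, add_smul, add_assoc]
  · refine ⟨-(b + k • s'), LinearIndependent.pair_neg_right_iff.2 hbk, fun i => ?_⟩
    rw [hσ, hk, ← hsymm', sub_smul]
    congr 1
    abel

lemma color_add_smul_eq (H : ColorIso c c') (hss' : c s = c' s') (hs : IsSolitary c s)
    (h : c a = c' b) (i : ZMod 3) : c (a + i • s) = c' (b + i • s') := by
  rcases zmod_three_cases i with rfl | rfl | rfl
  · simpa using h
  · simpa using H.color_add_eq hss' hs h
  · simpa using H.color_add_eq (H.map_neg hss') (H.isSolitary_neg hs) h

lemma exists_linearEquiv_of_isSolitary (H : ColorIso c c') (hV : Module.finrank (ZMod 3) V = 2)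
    (hs : IsSolitary c s) (hs0 : s ≠ 0) (h : c a = c' b) :
    ∃ f : V ≃ₗ[ZMod 3] V, f a = b ∧ ∀ x, c x = c' (f x) := by
  obtain ⟨π, hπ⟩ := H.exists_color_perm
  have hss' : c s = c' (π s) := hπ s
  have hs0' : π s ≠ 0 := (H.eq_zero_iff hss').not.1 hs0
  have smul_of_smul {x y : V} (hxy : c x = c' y) {i : ZMod 3} (hx : x = i • s) : y = i • π s := by
    have := (H.eq_zero_iff (H.color_add_smul_eq hss' hs hxy (-i))).1 (by simp [hx])
    simpa [add_neg_eq_zero] using this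
  have notin_line {x y : V} (hxy : c x = c' y) (hx : LinearIndependent (ZMod 3) ![s, x]) :
      LinearIndependent (ZMod 3) ![π s, y] := by
    rw [LinearIndependent.pair_iff' hs0] at hx
    rw [LinearIndependent.pair_iff' hs0']
    intro i hi
    have := (H.eq_zero_iff (H.color_add_smul_eq hss' hs hxy (-i))).2 (by simp [← hi])
    rw [neg_smul, add_neg_eq_zero] at this
    exact hx i this.symm
  have hline {x y : V} (hxy : c x = c' y) (hx : LinearIndependent (ZMod 3) ![s, x]) :=
    H.exists_linearEquiv_of_line hV hx (notin_line hxy hx) hss' (H.color_add_smul_eq hss' hs hxy)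
  by_cases ha : LinearIndependent (ZMod 3) ![s, a]
  · obtain ⟨f, -, hfa, hf⟩ := hline h ha
    exact ⟨f, hfa, hf⟩
  · obtain ⟨i, rfl⟩ : ∃ i : ZMod 3, i • s = a := by
      simpa [LinearIndependent.pair_iff' hs0] using ha
    obtain ⟨t, ht⟩ := exists_linearIndependent_pair_of_one_lt_finrank
      (by rw [hV]; exact one_lt_two) hs0
    obtain ⟨f, hfs, -, hf⟩ := hline (hπ t) ht
    exact ⟨f, by rw [map_smul, hfs, smul_of_smul h rfl], hf⟩

section Antisymmetric

variable {d e x y : V}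

lemma linearIndependent_of_color_eq (H : ColorIso c c) (he : c (-e) ≠ c e) (hx : c x = c e)
    (hxe : x ≠ e) : LinearIndependent (ZMod 3) ![e, x] := by
  have he0 : e ≠ 0 := by rintro rfl; simp at he
  rw [LinearIndependent.pair_iff' he0]
  intro i hi
  rcases zmod_three_cases i with rfl | rfl | rfl
  · exact he0 ((H.eq_zero_iff hx).1 (by simpa using hi.symm))
  · exact hxe (by simpa using hi.symm)
  · exact he (by rw [← hx, ← hi, neg_one_smul])

lemma color_sub_eq_of_color_add_eq (H : ColorIso c c) (hV : Module.finrank (ZMod 3) V = 2)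
    (he : c (-e) ≠ c e) (hx : c x = c e) (hxe : x ≠ e) (h : c (e + x) = c e) :
    c (e - x) = c e := by
  obtain ⟨π, hπ⟩ := H.exists_perm h
  have hu : c (π x) = c e := (hπ x).1.symm.trans hx
  have hu' : c (e - π x) = c e := by simpa using (hπ x).2.symm
  have he0 : c 0 ≠ c e := fun h0 => he (by simp [(H.eq_zero_iff h0).1 rfl])
  rcases eq_of_linearIndependent_pair hV (H.linearIndependent_of_color_eq he hx hxe) (π x)
    with (hy | hy | hy) | (hy | hy | hy) | (hy | hy | hy) <;> rw [hy] at hu hu'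
  · exact absurd hu he0
  · exact absurd hu' (by simpa using he0)
  · exact absurd hu he
  · exact hu'
  · exact absurd hu' (by simpa using H.color_neg_ne he hx)
  · rw [sub_add_eq_sub_sub, sub_neg_eq_add, add_self_eq_neg_of_zmod_three, ← neg_add'] at hu'
    exact absurd hu' (H.color_neg_ne he h)
  · exact absurd hu (H.color_neg_ne he hx)
  · rwa [sub_eq_add_neg]
  · rw [← neg_add] at hu
    exact absurd hu (H.color_neg_ne he h)

lemma color_add_ne (H : ColorIso c c) (hV : Module.finrank (ZMod 3) V = 2)
    (he : c (-e) ≠ c e) (hx : c x = c e) (hy : c y = c e) : c (x + y) ≠ c e := by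
  intro h
  rcases eq_or_ne x y with rfl | hxy
  · rw [add_self_eq_neg_of_zmod_three] at h
    exact H.color_neg_ne he hx h
  · have hsub {s t : V} (hs : c s = c e) (ht : c t = c e) (hne : t ≠ s) (hst : c (s + t) = c e) :
        c (s - t) = c e := by
      have := H.color_sub_eq_of_color_add_eq hV (hs ▸ H.color_neg_ne he hs) (ht.trans hs.symm) hne
        (hst.trans hs.symm)
      exact this.trans hs
    refine H.color_neg_ne he (hsub hx hy hxy.symm h) ?_
    rw [neg_sub]
    exact hsub hy hx hxy (by rwa [add_comm])

lemma eq_of_color_eq (H : ColorIso c c) (hV : Module.finrank (ZMod 3) V = 2)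
    (he : c (-e) ≠ c e) (hx : c x = c e) (hxe : x ≠ e) (hy : c y = c e) :
    y = e ∨ y = x ∨ y = -(e + x) := by
  have add_ne {s t : V} := H.color_add_ne hV (x := s) (y := t) he
  rcases eq_of_linearIndependent_pair hV (H.linearIndependent_of_color_eq he hx hxe) y
    with (rfl | rfl | rfl) | (rfl | rfl | rfl) | (rfl | rfl | rfl)
  · exact absurd (by simp [(H.eq_zero_iff hy).1 rfl]) he
  · exact .inl rfl
  · exact absurd hy he
  · exact .inr (.inl rfl)
  · exact absurd hy (add_ne rfl hx)
  · exact absurd hx (by simpa using add_ne rfl hy)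
  · exact absurd hy (H.color_neg_ne he hx)
  · exact absurd (by rw [neg_add_cancel_right]) (add_ne hy hx)
  · exact .inr (.inr (neg_add e x).symm)

lemma color_neg_add_eq (H : ColorIso c c) (hV : Module.finrank (ZMod 3) V = 2)
    (hsol : ∀ s, IsSolitary c s → s = 0) (he : c (-e) ≠ c e) (hx : c x = c e) (hxe : x ≠ e) :
    c (-(e + x)) = c e := by
  by_contra hne
  have eq_or {y : V} (hy : c y = c e) : y = e ∨ y = x := by
    rcases H.eq_of_color_eq hV he hx hxe hy with h | h | rfl
    · exact .inl h
    · exact .inr h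
    · exact absurd hy hne
  have hneg {y : V} (hy : c y = c e) (h : c (-y) = c (e + x)) : False :=
    hne (by rw [← H.map_neg h, neg_neg, hy])
  have hadd : IsSolitary c (e + x) := by
    intro y hy
    obtain ⟨π, hπ⟩ := H.exists_perm hy.symm
    have h₁ : c (π e) = c e := (hπ e).1.symm
    have h₂ : c (y - π e) = c e := by rw [← (hπ e).2, add_sub_cancel_left, hx]
    rcases eq_or h₁ with hu | hu <;> rcases eq_or h₂ with hv | hv <;> rw [hu] at hv <;>
      obtain rfl := eq_add_of_sub_eq hv
    · exact (hneg rfl (by rwa [← add_self_eq_neg_of_zmod_three])).elim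
    · rw [add_comm]
    · rfl
    · exact (hneg hx (by rwa [← add_self_eq_neg_of_zmod_three])).elim
  rw [eq_neg_of_add_eq_zero_right (hsol _ hadd)] at hx
  exact he hx

-- The class of `e` is a coset of a line, and the class of a difference of two of its points
-- contains nothing but such differences.
lemma exists_color_add_smul_eq (H : ColorIso c c) (hV : Module.finrank (ZMod 3) V = 2)
    (hsol : ∀ s, IsSolitary c s → s = 0) (he : c (-e) ≠ c e) :
    ∃ d ≠ 0, c (-d) = c d ∧ ∀ i : ZMod 3, c (e + i • d) = c e := by
  have exists_ne {s : V} (hs : s ≠ 0) : ∃ y, c y = c s ∧ y ≠ s := by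
    simpa [IsSolitary] using mt (hsol s) hs
  obtain ⟨x, hx, hxe⟩ := exists_ne (s := e) (by rintro rfl; simp at he)
  have hd : x - e ≠ 0 := sub_ne_zero.2 hxe
  have exists_smul {y : V} (hy : c y = c e) : ∃ i : ZMod 3, e + i • (x - e) = y := by
    rcases H.eq_of_color_eq hV he hx hxe hy with rfl | rfl | rfl
    · exact ⟨0, by simp⟩
    · exact ⟨1, by simp⟩
    · exact ⟨-1, by rw [neg_one_smul, neg_add_eq_add_neg_sub_of_zmod_three]⟩
  refine ⟨x - e, hd, ?_, fun i => ?_⟩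
  · obtain ⟨y, hy, hyd⟩ := exists_ne hd
    obtain ⟨π, hπ⟩ := H.exists_perm hy.symm
    obtain ⟨i, hi⟩ := exists_smul ((hπ x).1.symm.trans hx)
    obtain ⟨j, hj⟩ := exists_smul (y := π x - y) (by simpa using (H.map_neg (hπ x).2).symm)
    have hy0 : y ≠ 0 := (H.eq_zero_iff hy).not.2 hd
    obtain rfl : (i - j) • (x - e) = y := by
      rw [sub_smul, ← add_sub_add_left_eq_sub, hi, hj, sub_sub_cancel]
    rcases zmod_three_cases (i - j) with hij | hij | hij <;> rw [hij] at hy hy0 hyd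
    · simp at hy0
    · simp at hyd
    · simpa using hy
  · rcases zmod_three_cases i with rfl | rfl | rfl
    · simp
    · simpa using hx
    · rw [neg_one_smul, ← neg_add_eq_add_neg_sub_of_zmod_three,
        H.color_neg_add_eq hV hsol he hx hxe]

lemma linearIndependent_of_color_neg (he : c (-e) ≠ c e) (hd0 : d ≠ 0) (hd : c (-d) = c d) :
    LinearIndependent (ZMod 3) ![d, e] := by
  rw [LinearIndependent.pair_iff' hd0]
  rintro i rfl
  rcases zmod_three_cases i with rfl | rfl | rfl <;> simp [hd] at he

lemma color_add_smul_eq_self (H : ColorIso c c) (hV : Module.finrank (ZMod 3) V = 2)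
    (hsol : ∀ s, IsSolitary c s → s = 0) (he : c (-e) ≠ c e) (hd0 : d ≠ 0) (hd : c (-d) = c d)
    (i : ZMod 3) : c (e + i • d) = c e := by
  obtain ⟨d', hd'0, hd', hline⟩ := H.exists_color_add_smul_eq hV hsol he
  have color_add_ne_neg (j : ZMod 3) : c (-(e + j • d')) ≠ c (e + j • d') := by
    rw [hline]
    exact H.color_neg_ne he (hline j)
  obtain ⟨j, rfl⟩ : ∃ j : ZMod 3, d = j • d' := by
    obtain ⟨f, hf⟩ := exists_linearEquiv_of_linearIndependent_pair hV
      (linearIndependent_of_color_neg he hd'0 hd')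
    obtain ⟨⟨j, k⟩, rfl⟩ := f.surjective d
    rw [hf] at hd hd0 ⊢
    rcases zmod_three_cases k with rfl | rfl | rfl
    · exact ⟨j, by simp⟩
    · exact absurd (by simpa [add_comm] using hd) (color_add_ne_neg j)
    · exact absurd (by simpa [add_comm] using hd.symm) (color_add_ne_neg (-j))
  rw [smul_smul, hline]

end Antisymmetric

lemma exists_linearEquiv_of_color_neg_ne (H : ColorIso c c')
    (hV : Module.finrank (ZMod 3) V = 2) (hsol : ∀ s, IsSolitary c s → s = 0) {d d' e e' : V}
    (he : c (-e) ≠ c e) (hd0 : d ≠ 0) (hd : c (-d) = c d) (hdd' : c d = c' d')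
    (hee' : c e = c' e') : ∃ f : V ≃ₗ[ZMod 3] V, f d = d' ∧ f e = e' ∧ ∀ x, c x = c' (f x) := by
  have hsol' (s' : V) (hs' : IsSolitary c' s') : s' = 0 := by
    obtain ⟨π, hπ⟩ := H.symm.exists_color_perm
    exact (H.symm.eq_zero_iff (hπ s')).2 (hsol _ (H.symm.isSolitary_of_color_eq (hπ s') hs'))
  have he' : c' (-e') ≠ c' e' := by rwa [← H.map_neg hee', ← hee']
  have hd'0 : d' ≠ 0 := (H.eq_zero_iff hdd').not.1 hd0
  have hd' : c' (-d') = c' d' := by rw [← H.map_neg hdd', ← hdd', hd]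
  refine H.exists_linearEquiv_of_line hV (linearIndependent_of_color_neg he hd0 hd)
    (linearIndependent_of_color_neg he' hd'0 hd') hdd' fun i => ?_
  rw [H.self.color_add_smul_eq_self hV hsol he hd0 hd,
    H.symm.self.color_add_smul_eq_self hV hsol' he' hd'0 hd', hee']

lemma exists_linearEquiv_of_ne_zero [Finite V] (H : ColorIso c c')
    (hV : Module.finrank (ZMod 3) V = 2) (h : c a = c' b) (ha0 : a ≠ 0) :
    ∃ f : V ≃ₗ[ZMod 3] V, f a = b ∧ ∀ x, c x = c' (f x) := by
  by_cases hsol : ∃ s, IsSolitary c s ∧ s ≠ 0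
  · obtain ⟨s, hs, hs0⟩ := hsol
    exact H.exists_linearEquiv_of_isSolitary hV hs hs0 h
  push Not at hsol
  obtain ⟨π, hπ⟩ := H.exists_color_perm
  by_cases hsymm : ∀ x, c (-x) = c x
  · exact H.exists_linearEquiv_of_symmetric hV hsymm ha0 h
  push Not at hsymm
  obtain ⟨e, he⟩ := hsymm
  by_cases ha : c (-a) = c a
  · obtain ⟨f, hfa, -, hf⟩ := H.exists_linearEquiv_of_color_neg_ne hV hsol he ha0 ha h (hπ e)
    exact ⟨f, hfa, hf⟩
  · obtain ⟨d, hd0, hd, -⟩ := H.self.exists_color_add_smul_eq hV hsol ha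
    obtain ⟨f, -, hfa, hf⟩ := H.exists_linearEquiv_of_color_neg_ne hV hsol ha hd0 hd (hπ d) h
    exact ⟨f, hfa, hf⟩

theorem exists_linearEquiv [Finite V] (H : ColorIso c c') (hV : Module.finrank (ZMod 3) V = 2)
    (h : c a = c' b) : ∃ f : V ≃ₗ[ZMod 3] V, f a = b ∧ ∀ x, c x = c' (f x) := by
  rcases eq_or_ne a 0 with rfl | ha0
  · have : Nontrivial V := Module.nontrivial_of_finrank_pos (R := ZMod 3) (hV ▸ two_pos)
    obtain ⟨s, hs0⟩ := exists_ne (0 : V)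
    obtain ⟨π, hπ⟩ := H.exists_color_perm
    obtain ⟨f, -, hf⟩ := H.exists_linearEquiv_of_ne_zero hV (hπ s) hs0
    exact ⟨f, f.map_zero.trans ((H.eq_zero_iff h).1 rfl).symm, hf⟩
  · exact H.exists_linearEquiv_of_ne_zero hV h ha0

end Plane

end ColorIso

namespace SchurRing

section Transitivity

variable {V C : Type*} [AddCommGroup V] [Fintype V] [CommGroup C] [Fintype C]
  {A : SchurRing (Multiplicative V × C)} {a b : V} {z w : C}

lemma colorIso_fiber (hA : A.IsDense) (hC : (Nat.card C).Prime) (hpow : A.IsSndPowInvariant)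
    (h : A.rel (.ofAdd a, z) (.ofAdd b, w)) :
    ColorIso (fun x => (⟦(.ofAdd x, z)⟧ : Quotient A.rel)) fun x => ⟦(.ofAdd x, w)⟧ where
  map_zero := Quotient.sound (hA.rel_snd h)
  eq_zero_iff h := hA.fst_eq_one_iff (Quotient.exact h)
  map_neg {a b} h := by
    have inv_pow_card_sub_one (u : C) : u⁻¹ ^ (Nat.card C - 1) = u := by
      rw [inv_pow, inv_eq_iff_mul_eq_one, pow_sub_one_mul Nat.card_pos.ne', pow_card_eq_one']
    have hinv : A.rel (.ofAdd (-a), z⁻¹) (.ofAdd (-b), w⁻¹) := rel_inv (Quotient.exact h)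
    have := hpow (Nat.card C - 1) hinv
    rw [inv_pow_card_sub_one, inv_pow_card_sub_one] at this
    exact Quotient.sound this
  exists_perm {a b} h := by
    obtain ⟨π, hπ⟩ := exists_perm_fiber hA hC hpow (Quotient.exact h)
    refine ⟨π, fun x => ⟨Quotient.sound (hπ x).1, Quotient.sound ?_⟩⟩
    convert (hπ x).2 using 2
    · exact sub_eq_neg_add a x
    · exact sub_eq_neg_add b (π x)

variable [Module (ZMod 3) V]

lemma exists_linearEquiv_rel (hA : A.IsDense) (hC : (Nat.card C).Prime)
    (hpow : A.IsSndPowInvariant) (hV : Module.finrank (ZMod 3) V = 2)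
    (h : A.rel (.ofAdd a, z) (.ofAdd b, w)) :
    ∃ f : V ≃ₗ[ZMod 3] V, f a = b ∧ ∀ x, A.rel (.ofAdd x, z) (.ofAdd (f x), w) := by
  obtain ⟨f, hf, hrel⟩ := (colorIso_fiber hA hC hpow h).exists_linearEquiv hV (Quotient.sound h)
  exact ⟨f, hf, fun x => Quotient.exact (hrel x)⟩

-- A linear map matching the fibre over `z ≠ 1` with the one over `z ^ m` matches the fibres over
-- `u` and `u ^ m` for all `u`, because every element of `C` is a power of `z`.
lemma exists_prodCongr_mem_of_ne_one (hA : A.IsDense) (hC : (Nat.card C).Prime)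
    (hpow : A.IsSndPowInvariant) (hV : Module.finrank (ZMod 3) V = 2) (hz : z ≠ 1)
    (h : A.rel (.ofAdd a, z) (.ofAdd b, w)) :
    ∃ (φ : MulAut (Multiplicative V)) (g : MulAut C),
      φ.prodCongr g ∈ A.automorphismGroup ∧ φ (.ofAdd a) = .ofAdd b ∧ g z = w := by
  have := Fact.mk hC
  obtain ⟨f, hfa, hf⟩ := exists_linearEquiv_rel hA hC hpow hV h
  have hw : w ≠ 1 := (hA.snd_eq_one_iff h).not.1 hz
  obtain ⟨m, rfl⟩ : ∃ m : ℕ, z ^ m = w := mem_powers_of_prime_card rfl hz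
  have hm : (Nat.card C).Coprime m := hC.coprime_iff_not_dvd.2 fun hdvd =>
    hw (orderOf_dvd_iff_pow_eq_one.1 ((orderOf_dvd_natCard z).trans hdvd))
  refine ⟨f.toAddEquiv.toMultiplicative,
    MulEquiv.ofBijective (powMonoidHom m) (powCoprime hm).bijective, ?_,
    congrArg Multiplicative.ofAdd hfa, rfl⟩
  rintro ⟨x, u⟩
  obtain ⟨k, rfl⟩ : ∃ k : ℕ, z ^ k = u := mem_powers_of_prime_card rfl hz
  have := hpow k (hf x.toAdd)
  rwa [pow_right_comm] at this

theorem IsDense.isCyclotomic (hA : A.IsDense) (hC : (Nat.card C).Prime)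
    (hpow : A.IsSndPowInvariant) (hV : Module.finrank (ZMod 3) V = 2) : A.IsCyclotomic := by
  refine A.isCyclotomic_of_transitive ?_
  rintro ⟨a, z⟩ ⟨b, w⟩ h
  by_cases hz : z = 1
  · have : Nontrivial C := Finite.one_lt_card_iff_nontrivial.1 hC.one_lt
    obtain ⟨u, hu⟩ := exists_ne (1 : C)
    obtain ⟨σ, hσ⟩ := hA.exists_perm_snd h
    obtain ⟨φ, g, hmem, hφ, -⟩ := exists_prodCongr_mem_of_ne_one hA hC hpow hV hu (hσ u)
    have hw : w = 1 := (hA.snd_eq_one_iff h).1 hz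
    exact ⟨_, hmem, Prod.ext hφ (by rw [hz, hw]; exact map_one g)⟩
  · obtain ⟨φ, g, hmem, hφ, hg⟩ := exists_prodCongr_mem_of_ne_one hA hC hpow hV hz h
    exact ⟨_, hmem, Prod.ext hφ hg⟩

end Transitivity

end SchurRing

theorem dense_sring_over_E9xCp_cyclotomic (p : ℕ) [Fact p.Prime]
    (A : SchurRing (Multiplicative (ZMod 3 × ZMod 3) × Multiplicative (ZMod p)))
    (hA : A.IsASubgroup ((⊤ : Subgroup (Multiplicative (ZMod 3 × ZMod 3))).prod
            (⊥ : Subgroup (Multiplicative (ZMod p)))))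
    (hP : A.IsASubgroup ((⊥ : Subgroup (Multiplicative (ZMod 3 × ZMod 3))).prod
            (⊤ : Subgroup (Multiplicative (ZMod p))))) :
    A.IsCyclotomic := by
  have hdense : A.IsDense := ⟨hA, hP⟩
  have hp : p.Prime := Fact.out
  have hC : Nat.card (Multiplicative (ZMod p)) = p := by simp
  have hV : Nat.card (Multiplicative (ZMod 3 × ZMod 3)) = 3 ^ 2 := by simp
  have hpow : A.IsSndPowInvariant := by
    by_cases hp3 : p = 3
    · exact hdense.isSndPowInvariant_of_card_eq_three (hC.trans hp3)
    · refine hdense.isSndPowInvariant_of_coprime (hC.symm ▸ hp) ?_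
      rw [hV, hC]
      exact ((Nat.coprime_primes Nat.prime_three hp).2 (Ne.symm hp3)).pow_left 2
  exact hdense.isCyclotomic (hC.symm ▸ hp) hpow (by simp)
end

section
/- Let p > 3 be a prime, G = A × P with A = E_9 and P = C_p, and let 𝒜 be an S-ring over G such that A is not an 𝒜-subgroup. Let C be the maximal 𝒜-subgroup of G contained in A (so |C| ∈ {1, 3}). Then one of the following holds: (1) 𝒜 = 𝒜_C ≀ 𝒜_{G/C} is the wreath product and rk(𝒜_{G/C}) = 2; (2) 𝒜 is the U/L-wreath product for some 𝒜-subgroups L ≤ U with P ≤ L < G and U = CL. -/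
open scoped Pointwise

/-!
Let `G = N × P` with `P` of prime order `p` not dividing `|N|`, let `C` be the largest `𝒜`-subgroup
contained in `N`, and write `S_a = {v : (a, v) ∈ S}` for the fibre of a set `S ⊆ G` over `a ∈ N`.
Since `Σ_{s∈S} s` raised to the power `q ^ k` is `Σ_{s∈S} s ^ (q ^ k)` modulo a prime `q`, the
elements whose number of `q ^ k`-th roots in an `𝒜`-set is not divisible by `q` form an `𝒜`-set. For
`q = p` and `p ^ k ≡ 1` modulo `|N|` the map `s ↦ s ^ (p ^ k)` is the projection onto `N`, so
`V = {(a, 1) : p ∤ |S_a|}` is an `𝒜`-set, and `V ⊆ C` by maximality. Hence the fibres of an `𝒜`-set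
over points outside `C` are empty or all of `P`.

Let `L` be the least `𝒜`-subgroup containing `P`. A basic set `X` outside `CL` is therefore
`P`-invariant, and its stabilizer, being an `𝒜`-subgroup, contains `L`. If `L = G`, let `Y` be a
basic set containing some `(a₀, 1) ∉ C`, and take `S = Y` above. Power maps with exponent prime to
`|G|` permute the basic sets, and those trivial on `N` fix `(a₀, 1)`, hence `Y`; so each nonempty
fibre of `Y` over `C` is `P ∖ {1}`. Thus `Y ∪ V` is `P`-invariant, hence `L`-invariant, hence all of
`G`, and `Y = G ∖ C`.
-/

section GroupRing

variable {G : Type*} [Fintype G]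

theorem grpSum_eq_sum [Group G] (S : Set G) [Fintype S] :
    grpSum S = ∑ s ∈ S.toFinset, MonoidAlgebra.single s 1 := by
  simpa [grpSum] using Finset.sum_indicator_subset (fun g : G => MonoidAlgebra.single g (1 : ℤ))
    (Finset.subset_univ S.toFinset)

theorem coeff_grpSum [Group G] (S : Set G) (g : G) : (grpSum S).coeff g = S.indicator 1 g := by
  classical
  simp [grpSum_eq_sum, Finsupp.single_apply, Set.indicator_apply]

theorem grpSum_singleton_one [Group G] : grpSum {(1 : G)} = 1 := by
  ext g
  by_cases h : g = 1 <;> simp [coeff_grpSum, MonoidAlgebra.one_def, h]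

theorem coeff_grpSum_mul_grpSum [Group G] (S T : Set G) (g : G) :
    (grpSum S * grpSum T).coeff g = ((S ∩ g • T⁻¹).ncard : ℤ) := by
  classical
  rw [MonoidAlgebra.coeff_mul_apply_left, Finsupp.sum_fintype _ _ (by simp),
    Set.ncard_eq_toFinset_card', ← Finset.filter_univ_mem (S ∩ g • T⁻¹).toFinset,
    Finset.natCast_card_filter]
  refine Finset.sum_congr rfl fun s _ => ?_
  have hmem : s ∈ (S ∩ g • T⁻¹).toFinset ↔ s ∈ S ∧ s⁻¹ * g ∈ T := by
    simp only [Set.mem_toFinset, Set.mem_inter_iff, Set.mem_smul_set_iff_inv_smul_mem, Set.mem_inv,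
      smul_eq_mul, mul_inv_rev, inv_inv]
  simp only [coeff_grpSum, Set.indicator_apply, Pi.one_apply, hmem, ite_zero_mul_ite_zero, mul_one]

theorem coeff_grpSum_pow_prime_pow [CommGroup G] (S : Set G) (q : ℕ) [Fact q.Prime] (k : ℕ)
    (y : G) :
    ((grpSum S ^ q ^ k).coeff y : ZMod q) = (S ∩ (· ^ q ^ k) ⁻¹' {y}).ncard := by
  classical
  have : CharP (MonoidAlgebra (ZMod q) G) q :=
    charP_of_injective_algebraMap (FaithfulSMul.algebraMap_injective (ZMod q) _) q
  have hmod : MonoidAlgebra.mapRingHom G (Int.castRingHom (ZMod q)) (grpSum S) =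
      ∑ s ∈ S.toFinset, MonoidAlgebra.single s 1 := by
    simp [grpSum_eq_sum]
  calc ((grpSum S ^ q ^ k).coeff y : ZMod q)
      = (MonoidAlgebra.mapRingHom G (Int.castRingHom (ZMod q)) (grpSum S ^ q ^ k)).coeff y := by
        rw [MonoidAlgebra.coeff_mapRingHom, eq_intCast]
    _ = (∑ s ∈ S.toFinset, MonoidAlgebra.single (s ^ q ^ k) (1 : ZMod q)).coeff y := by
        rw [map_pow, hmod, sum_pow_char_pow]
        simp
    _ = (S ∩ (· ^ q ^ k) ⁻¹' {y}).ncard := by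
        have hfilter : (S ∩ (· ^ q ^ k) ⁻¹' {y}).toFinset = {s ∈ S.toFinset | s ^ q ^ k = y} := by
          ext s
          simp
        rw [MonoidAlgebra.coeff_sum, Finsupp.finsetSum_apply, Set.ncard_eq_toFinset_card', hfilter,
          Finset.natCast_card_filter]
        simp only [MonoidAlgebra.coeff_single, Finsupp.single_apply]

end GroupRing

namespace SchurRing

section Group

variable {G : Type*} [Group G] [Fintype G] {A : SchurRing G} {S T X Y : Set G}
  {f : MonoidAlgebra ℤ G} {H K : Subgroup G}

theorem eq_of_mem (hX : X ∈ A.basicSets) (hY : Y ∈ A.basicSets) {g : G} (hgX : g ∈ X)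
    (hgY : g ∈ Y) : X = Y := by
  by_contra h
  exact Set.disjoint_left.1 (Set.disjoint_iff_inter_eq_empty.2 (A.disjoint' X hX Y hY h)) hgX hgY

theorem isASet_iff : A.IsASet S ↔ ∀ X ∈ A.basicSets, ∀ x ∈ X, x ∈ S → X ⊆ S := by
  constructor
  · rintro ⟨T, hT, rfl⟩ X hX x hx ⟨Y, hY, hxY⟩
    rw [eq_of_mem hX (hT hY) hx hxY]
    exact Set.subset_sUnion_of_mem hY
  · intro h
    refine ⟨{X ∈ A.basicSets | X ⊆ S}, fun X hX => hX.1, ?_⟩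
    refine Set.Subset.antisymm (fun g hg => ?_) (Set.sUnion_subset fun X hX => hX.2)
    obtain ⟨X, hX, hgX⟩ := A.cover g
    exact ⟨X, ⟨hX, h X hX g hgX hg⟩, hgX⟩

theorem isASet_of_mem (hX : X ∈ A.basicSets) : A.IsASet X :=
  ⟨{X}, by simpa using hX, by simp⟩

theorem IsASet.subset (hS : A.IsASet S) (hX : X ∈ A.basicSets) {x : G} (hxX : x ∈ X)
    (hxS : x ∈ S) : X ⊆ S :=
  isASet_iff.1 hS X hX x hxX hxS

theorem IsASet.union (hS : A.IsASet S) (hT : A.IsASet T) : A.IsASet (S ∪ T) :=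
  isASet_iff.2 fun _ hX _ hxX hx => hx.elim
    (fun h => (hS.subset hX hxX h).trans Set.subset_union_left)
    fun h => (hT.subset hX hxX h).trans Set.subset_union_right

theorem IsASet.inv (hS : A.IsASet S) : A.IsASet S⁻¹ :=
  isASet_iff.2 fun X hX _ hxX hx => Set.inv_subset.1 <|
    hS.subset (A.inv_mem X hX) (Set.inv_mem_inv.2 hxX) hx

variable (A) in
/-- The S-ring `𝒜` itself, as a subring of `ℤG`. -/
noncomputable def toSubalgebra : Subalgebra ℤ (MonoidAlgebra ℤ G) :=
  (Submodule.span ℤ (grpSum '' A.basicSets)).toSubalgebra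
    (Submodule.subset_span ⟨{1}, A.one_mem, grpSum_singleton_one⟩) fun f g hf hg => by
      have h := Submodule.mul_mem_mul hf hg
      rw [Submodule.span_mul_span] at h
      refine Submodule.span_le.2 ?_ h
      rintro _ ⟨_, ⟨X, hX, rfl⟩, _, ⟨Y, hY, rfl⟩, rfl⟩
      exact A.mul_mem X hX Y hY

theorem coeff_eq_of_mem_toSubalgebra (hf : f ∈ A.toSubalgebra) (hX : X ∈ A.basicSets) {x y : G}
    (hx : x ∈ X) (hy : y ∈ X) : f.coeff x = f.coeff y := by
  rw [toSubalgebra, Submodule.mem_toSubalgebra] at hf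
  induction hf using Submodule.span_induction with
  | mem f hf =>
    obtain ⟨Y, hY, rfl⟩ := hf
    have hxy : x ∈ Y ↔ y ∈ Y :=
      ⟨fun h => eq_of_mem hX hY hx h ▸ hy, fun h => eq_of_mem hX hY hy h ▸ hx⟩
    by_cases h : x ∈ Y <;> simp [coeff_grpSum, ← hxy, h]
  | zero => simp
  | add f g _ _ hf hg => simp [hf, hg]
  | smul a f _ hf => simp only [MonoidAlgebra.coeff_smul_apply, hf]

theorem isASet_preimage_coeff (hf : f ∈ A.toSubalgebra) (t : Set ℤ) : A.IsASet (f.coeff ⁻¹' t) :=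
  isASet_iff.2 fun X hX x hxX hx y hyX => by
    rwa [Set.mem_preimage, coeff_eq_of_mem_toSubalgebra hf hX hyX hxX]

theorem grpSum_sUnion {F : Set (Set G)} [Fintype F] (hF : F ⊆ A.basicSets) :
    grpSum (⋃₀ F) = ∑ X ∈ F.toFinset, grpSum X := by
  classical
  ext g
  obtain ⟨X, hX, hgX⟩ := A.cover g
  have hmem : ∀ Y ∈ F, g ∈ Y ↔ Y = X :=
    fun Y hY => ⟨fun h => eq_of_mem (hF hY) hX h hgX, fun h => h ▸ hgX⟩
  have hsUnion : g ∈ ⋃₀ F ↔ X ∈ F :=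
    ⟨fun ⟨Y, hY, hgY⟩ => (hmem Y hY).1 hgY ▸ hY, fun h => ⟨X, h, hgX⟩⟩
  calc (grpSum (⋃₀ F)).coeff g = ∑ Y ∈ F.toFinset, if Y = X then 1 else 0 := by
        simp [coeff_grpSum, Set.indicator_apply, hsUnion]
    _ = ∑ Y ∈ F.toFinset, (grpSum Y).coeff g := Finset.sum_congr rfl fun Y hY => by
        simp [coeff_grpSum, Set.indicator_apply, hmem Y (by simpa using hY)]
    _ = (∑ Y ∈ F.toFinset, grpSum Y).coeff g := by
        rw [MonoidAlgebra.coeff_sum, Finsupp.finsetSum_apply]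

theorem IsASet.grpSum_mem_toSubalgebra (hS : A.IsASet S) : grpSum S ∈ A.toSubalgebra := by
  classical
  obtain ⟨F, hF, rfl⟩ := hS
  rw [grpSum_sUnion hF]
  exact sum_mem fun X hX => Submodule.subset_span ⟨X, hF (by simpa using hX), rfl⟩

theorem IsASet.mul (hS : A.IsASet S) (hT : A.IsASet T) : A.IsASet (S * T) := by
  convert isASet_preimage_coeff
    (A.toSubalgebra.mul_mem hS.grpSum_mem_toSubalgebra hT.grpSum_mem_toSubalgebra) {0}ᶜ using 1
  ext g
  rw [Set.mem_preimage, coeff_grpSum_mul_grpSum, Set.mem_compl_singleton_iff, Nat.cast_ne_zero,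
    ← Nat.pos_iff_ne_zero, Set.ncard_pos, Set.mem_mul]
  constructor
  · rintro ⟨s, hs, t, ht, rfl⟩
    exact ⟨s, hs, by simpa [Set.mem_smul_set_iff_inv_smul_mem] using ht⟩
  · rintro ⟨s, hs, hg⟩
    exact ⟨s, hs, s⁻¹ * g, by simpa [Set.mem_smul_set_iff_inv_smul_mem] using hg, by simp⟩

theorem IsASet.isASubgroup_closure (hS : A.IsASet S) : A.IsASubgroup (Subgroup.closure S) := by
  refine isASet_iff.2 fun X hX x hxX hx => ?_
  induction hx using Subgroup.closure_induction generalizing X with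
  | mem x hx => exact (hS.subset hX hxX hx).trans Subgroup.subset_closure
  | one => simp [eq_of_mem hX A.one_mem hxX rfl]
  | mul x y _ _ ihx ihy =>
    obtain ⟨Y, hY, hxY⟩ := A.cover x
    obtain ⟨Z, hZ, hyZ⟩ := A.cover y
    calc X ⊆ Y * Z := ((isASet_of_mem hY).mul (isASet_of_mem hZ)).subset hX hxX
          (Set.mul_mem_mul hxY hyZ)
      _ ⊆ Subgroup.closure S := Set.mul_subset_iff.2 fun y hy z hz =>
          Subgroup.mul_mem _ (ihx Y hY hxY hy) (ihy Z hZ hyZ hz)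
  | inv x _ ih =>
    simpa using Set.inv_subset_inv.2 (ih X⁻¹ (A.inv_mem X hX) hxX)

theorem IsASet.isASubgroup_stabilizer (hS : A.IsASet S) :
    A.IsASubgroup (MulAction.stabilizer G S) := by
  rw [IsASubgroup]
  convert isASet_preimage_coeff
    (A.toSubalgebra.mul_mem hS.grpSum_mem_toSubalgebra hS.inv.grpSum_mem_toSubalgebra)
    {(S.ncard : ℤ)} using 1
  ext g
  rw [Set.mem_preimage, coeff_grpSum_mul_grpSum, inv_inv, SetLike.mem_coe,
    MulAction.mem_stabilizer_iff, Set.mem_singleton_iff, Nat.cast_inj]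
  constructor
  · intro h
    rw [h, Set.inter_self]
  · intro h
    have hSg : S ⊆ g • S :=
      Set.inter_eq_left.1 (Set.eq_of_subset_of_ncard_le Set.inter_subset_left h.ge)
    exact (Set.eq_of_subset_of_ncard_le hSg (Set.ncard_smul_set g S).le).symm

variable (A H) in
/-- The least `𝒜`-subgroup containing the subgroup `H`. -/
def hull : Subgroup G :=
  sInf {K | A.IsASubgroup K ∧ H ≤ K}

theorem le_hull : H ≤ A.hull H :=
  le_sInf fun _ hK => hK.2

theorem IsASubgroup.hull_le (hK : A.IsASubgroup K) (h : H ≤ K) : A.hull H ≤ K :=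
  sInf_le ⟨hK, h⟩

theorem isASubgroup_hull : A.IsASubgroup (A.hull H) :=
  isASet_iff.2 fun _ hX _ hxX hx _ hyX => Subgroup.mem_sInf.2 fun K hK =>
    hK.1.subset hX hxX (Subgroup.mem_sInf.1 hx K hK) hyX

theorem IsASet.eq_univ_of_hull_eq_top (hS : A.IsASet S) (hne : S.Nonempty)
    (hstab : H ≤ MulAction.stabilizer G S) (htop : A.hull H = ⊤) : S = Set.univ := by
  obtain ⟨s, hs⟩ := hne
  refine Set.eq_univ_of_forall fun g => ?_
  have hg : g * s⁻¹ ∈ MulAction.stabilizer G S :=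
    hS.isASubgroup_stabilizer.hull_le hstab (htop ▸ Subgroup.mem_top _)
  simpa using (MulAction.mem_stabilizer_set.1 hg s).2 hs

end Group

section CommGroup

variable {G : Type*} [CommGroup G] [Fintype G] {A : SchurRing G} {S : Set G} {U L C : Subgroup G}

theorem IsASubgroup.sup (hU : A.IsASubgroup U) (hL : A.IsASubgroup L) : A.IsASubgroup (U ⊔ L) := by
  rw [IsASubgroup, Subgroup.mul_normal]
  exact IsASet.mul hU hL

theorem isWreathSection_of_le_stabilizer (hU : A.IsASubgroup U) (hL : A.IsASubgroup L)
    (hLU : L ≤ U)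
    (h : ∀ X ∈ A.basicSets, Disjoint X U → L ≤ MulAction.stabilizer G X) :
    A.IsWreathSection U L := by
  refine ⟨hU, hL, hLU, inferInstance, fun X hX hXU g hg => ?_⟩
  have hdisj : Disjoint X U :=
    Set.disjoint_left.2 fun x hxX hxU => hXU (hU.subset hX hxX hxU)
  have himage : (g * ·) '' X = X := h X hX hdisj hg
  exact ⟨himage, by simpa only [mul_comm] using himage⟩

theorem isWreathSection_self_of_compl_mem (hC : A.IsASubgroup C)
    (hcompl : (C : Set G)ᶜ ∈ A.basicSets) : A.IsWreathSection C C := by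
  refine isWreathSection_of_le_stabilizer hC hC le_rfl fun X hX hXC => ?_
  obtain ⟨x, hx⟩ := A.nonempty_mem X hX
  rw [eq_of_mem hX hcompl hx (Set.disjoint_left.1 hXC hx), stabilizer_compl,
    MulAction.stabilizer_subgroup]

theorem IsASet.not_dvd_ncard_pow (hS : A.IsASet S) {q : ℕ} (hq : q.Prime) (k : ℕ) :
    A.IsASet {y | ¬ q ∣ (S ∩ (· ^ q ^ k) ⁻¹' {y}).ncard} := by
  have : Fact q.Prime := ⟨hq⟩
  convert isASet_preimage_coeff (A.toSubalgebra.pow_mem hS.grpSum_mem_toSubalgebra (q ^ k))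
    {n | ¬ (q : ℤ) ∣ n} using 1
  ext y
  rw [Set.mem_preimage, Set.mem_ofPred_eq, Set.mem_ofPred_eq, ← ZMod.intCast_zmod_eq_zero_iff_dvd,
    coeff_grpSum_pow_prime_pow, ZMod.natCast_eq_zero_iff]

theorem IsASet.image_pow {m : ℕ} (hm : (Nat.card G).Coprime m) (hS : A.IsASet S) :
    A.IsASet ((· ^ m) '' S) := by
  induction m using Nat.recOnMul generalizing S with
  | zero =>
    have : Subsingleton G := (Nat.card_eq_one_iff_unique.1 (by simpa using hm)).1
    rwa [Subsingleton.elim (fun x : G => x ^ 0) id, Set.image_id]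
  | one => simpa using hS
  | prime q hq =>
    convert hS.not_dvd_ncard_pow hq 1 using 1
    have hinj : Function.Injective (· ^ q : G → G) := (powCoprime hm).injective
    ext y
    constructor
    · rintro ⟨x, hx, rfl⟩
      have hroots : S ∩ (· ^ q ^ 1) ⁻¹' {(fun z => z ^ q) x} = {x} := by
        ext z
        simpa [hinj.eq_iff] using fun h : z = x => h ▸ hx
      rw [Set.mem_ofPred_eq, hroots, Set.ncard_singleton]
      exact hq.not_dvd_one
    · intro hy
      obtain ⟨x, hx, hxy⟩ := Set.nonempty_of_ncard_ne_zero fun h => hy (h ▸ dvd_zero q)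
      exact ⟨x, hx, by simpa using hxy⟩
  | mul a b iha ihb =>
    have h := ihb (Nat.Coprime.coprime_mul_left_right hm)
      (iha (Nat.Coprime.coprime_mul_right_right hm) hS)
    simpa only [Set.image_image, ← pow_mul] using h

end CommGroup

section Prod

variable {N P : Type*} [CommGroup N] [CommGroup P]

theorem bot_prod_top_le_stabilizer {S : Set (N × P)} (hS : ∀ a u v, (a, u) ∈ S → (a, v) ∈ S) :
    (⊥ : Subgroup N).prod (⊤ : Subgroup P) ≤ MulAction.stabilizer (N × P) S := by
  rintro ⟨n, w⟩ hn
  obtain rfl : n = 1 := by simpa [Subgroup.mem_prod] using hn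
  rw [MulAction.mem_stabilizer_set]
  rintro ⟨a, u⟩
  simpa using ⟨hS a _ _, hS a _ _⟩

theorem pow_card_pow_totient [Finite N] (hNP : (Nat.card N).Coprime (Nat.card P)) (x : N × P) :
    x ^ Nat.card P ^ Nat.totient (Nat.card N) = (x.1, 1) := by
  have hN : x.1 ^ Nat.card P ^ Nat.totient (Nat.card N) = x.1 ^ 1 :=
    pow_eq_pow_iff_modEq.2 ((Nat.ModEq.pow_totient hNP.symm).of_dvd (orderOf_dvd_natCard _))
  have hpos : Nat.totient (Nat.card N) ≠ 0 := (Nat.totient_pos.2 Nat.card_pos).ne'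
  have hP : x.2 ^ Nat.card P ^ Nat.totient (Nat.card N) = 1 :=
    orderOf_dvd_iff_pow_eq_one.1 ((orderOf_dvd_natCard _).trans (dvd_pow_self _ hpos))
  exact Prod.ext (by simpa using hN) hP

theorem exists_coprime_pow_eq [Finite N] (hP : (Nat.card P).Prime)
    (hNP : (Nat.card N).Coprime (Nat.card P)) {u v : P} (hu : u ≠ 1) (hv : v ≠ 1) :
    ∃ m, (Nat.card (N × P)).Coprime m ∧ (∀ a : N, a ^ m = a) ∧ u ^ m = v := by
  have : Fact (Nat.card P).Prime := ⟨hP⟩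
  obtain ⟨k, rfl⟩ := Submonoid.mem_powers_iff _ _ |>.1 (mem_powers_of_prime_card (g' := v) rfl hu)
  have hk : (Nat.card P).Coprime k := hP.coprime_iff_not_dvd.2 fun hdvd =>
    hv (orderOf_dvd_iff_pow_eq_one.1 ((orderOf_dvd_natCard u).trans hdvd))
  obtain ⟨m, hmN, hmP⟩ := Nat.chineseRemainder hNP 1 k
  refine ⟨m, ?_, fun a => ?_, ?_⟩
  · rw [Nat.card_prod]
    exact Nat.Coprime.mul_left (hmN.gcd_eq.trans (by simp) |> (Nat.coprime_comm.1 ·))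
      (Nat.coprime_comm.1 (hmP.gcd_eq.trans (Nat.coprime_comm.1 hk)))
  · simpa using pow_eq_pow_iff_modEq.2 (hmN.of_dvd (orderOf_dvd_natCard a))
  · exact pow_eq_pow_iff_modEq.2 (hmP.of_dvd (orderOf_dvd_natCard u))

variable [Fintype N] [Fintype P] {A : SchurRing (N × P)} {C : Subgroup (N × P)}
  {S X Y : Set (N × P)}

theorem IsASet.not_dvd_ncard_fiber (hS : A.IsASet S) (hP : (Nat.card P).Prime)
    (hNP : (Nat.card N).Coprime (Nat.card P)) :
    A.IsASet ({a | ¬ Nat.card P ∣ (Prod.mk a ⁻¹' S).ncard} ×ˢ {1}) := by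
  have hone (a : N) : S ∩ (· ^ Nat.card P ^ Nat.totient (Nat.card N)) ⁻¹' {(a, 1)} =
      Prod.mk a '' (Prod.mk a ⁻¹' S) := by
    ext x
    simp only [Set.mem_inter_iff, Set.mem_preimage, pow_card_pow_totient hNP,
      Set.mem_singleton_iff, Prod.mk.injEq, and_true, Set.mem_image]
    exact ⟨fun h => ⟨x.2, h.2 ▸ h.1, Prod.ext h.2.symm rfl⟩, fun ⟨w, hw, hx⟩ => hx ▸ ⟨hw, rfl⟩⟩
  have hne (a : N) {v : P} (hv : v ≠ 1) :
      S ∩ (· ^ Nat.card P ^ Nat.totient (Nat.card N)) ⁻¹' {(a, v)} = ∅ :=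
    Set.eq_empty_of_forall_notMem fun x ⟨_, hx⟩ =>
      hv (congrArg Prod.snd ((pow_card_pow_totient hNP x).symm.trans hx)).symm
  have hset : {y | ¬ Nat.card P ∣
      (S ∩ (· ^ Nat.card P ^ Nat.totient (Nat.card N)) ⁻¹' {y}).ncard} =
        {a | ¬ Nat.card P ∣ (Prod.mk a ⁻¹' S).ncard} ×ˢ {1} := by
    ext ⟨a, v⟩
    rcases eq_or_ne v 1 with rfl | hv
    · simp only [Set.mem_ofPred_eq, Set.mem_prod, Set.mem_singleton_iff, and_true, hone,
        Set.ncard_image_of_injective _ (Prod.mk_right_injective a)]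
    · simp only [Set.mem_ofPred_eq, Set.mem_prod, Set.mem_singleton_iff, hne a hv, hv, and_false,
        Set.ncard_empty, dvd_zero, not_true_eq_false]
  exact hset ▸ hS.not_dvd_ncard_pow hP (Nat.totient (Nat.card N))

theorem IsASet.not_dvd_ncard_fiber_subset (hS : A.IsASet S) (hP : (Nat.card P).Prime)
    (hNP : (Nat.card N).Coprime (Nat.card P))
    (hCmax : ∀ C', A.IsASubgroup C' → C' ≤ (⊤ : Subgroup N).prod (⊥ : Subgroup P) → C' ≤ C) :
    {a | ¬ Nat.card P ∣ (Prod.mk a ⁻¹' S).ncard} ×ˢ {1} ⊆ (C : Set (N × P)) := by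
  refine Subgroup.subset_closure.trans <|
    hCmax _ (hS.not_dvd_ncard_fiber hP hNP).isASubgroup_closure <| (Subgroup.closure_le _).2 ?_
  rintro ⟨a, v⟩ ⟨-, hv⟩
  exact Subgroup.mem_prod.2 ⟨Subgroup.mem_top a, Subgroup.mem_bot.2 hv⟩

theorem IsASet.mk_mem_of_mk_one_notMem (hS : A.IsASet S) (hP : (Nat.card P).Prime)
    (hNP : (Nat.card N).Coprime (Nat.card P))
    (hCmax : ∀ C', A.IsASubgroup C' → C' ≤ (⊤ : Subgroup N).prod (⊥ : Subgroup P) → C' ≤ C)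
    {a : N} (ha : (a, (1 : P)) ∉ C) {u : P} (hu : (a, u) ∈ S) (v : P) : (a, v) ∈ S := by
  have hdvd : Nat.card P ∣ (Prod.mk a ⁻¹' S).ncard := by
    by_contra h
    exact ha (hS.not_dvd_ncard_fiber_subset hP hNP hCmax ⟨h, rfl⟩)
  have huniv : Prod.mk a ⁻¹' S = Set.univ :=
    Set.eq_of_subset_of_ncard_le (Set.subset_univ _) <| by
      rw [Set.ncard_univ]
      exact Nat.le_of_dvd ((Set.ncard_pos (Set.toFinite _)).2 ⟨u, hu⟩) hdvd
  exact huniv.ge (Set.mem_univ v)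

theorem mk_mem_of_mk_one_mem (hX : X ∈ A.basicSets) (hP : (Nat.card P).Prime)
    (hNP : (Nat.card N).Coprime (Nat.card P)) {a c : N} {u v : P} (ha : (a, 1) ∈ X)
    (hcu : (c, u) ∈ X) (hu : u ≠ 1) (hv : v ≠ 1) : (c, v) ∈ X := by
  obtain ⟨m, hm, hN, huv⟩ := exists_coprime_pow_eq hP hNP hu hv
  have hsub : X ⊆ (· ^ m) '' X := ((isASet_of_mem hX).image_pow hm).subset hX ha
    ⟨(a, 1), ha, Prod.ext (hN a) (one_pow m)⟩
  have himage : X = (· ^ m) '' X := Set.eq_of_subset_of_ncard_le hsub (Set.ncard_image_le)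
  rw [himage]
  exact ⟨(c, u), hcu, Prod.ext (hN c) huv⟩

theorem compl_mem_basicSets_of_hull_eq_top (hP : (Nat.card P).Prime)
    (hNP : (Nat.card N).Coprime (Nat.card P)) (hC : A.IsASubgroup C)
    (hCmax : ∀ C', A.IsASubgroup C' → C' ≤ (⊤ : Subgroup N).prod (⊥ : Subgroup P) → C' ≤ C)
    (htop : A.hull ((⊥ : Subgroup N).prod (⊤ : Subgroup P)) = ⊤)
    {a₀ : N} (ha₀ : (a₀, (1 : P)) ∉ C) : (C : Set (N × P))ᶜ ∈ A.basicSets := by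
  obtain ⟨Y, hY, ha₀Y⟩ := A.cover (a₀, 1)
  have hYset : A.IsASet Y := isASet_of_mem hY
  set V : Set (N × P) := {a | ¬ Nat.card P ∣ (Prod.mk a ⁻¹' Y).ncard} ×ˢ {1}
  have hVset : A.IsASet V := hYset.not_dvd_ncard_fiber hP hNP
  have hVC : V ⊆ C := hYset.not_dvd_ncard_fiber_subset hP hNP hCmax
  have hYC : Y ⊆ (C : Set (N × P))ᶜ := fun y hyY hyC => ha₀ (hC.subset hY hyY hyC ha₀Y)
  have hfull : ∀ a u v, (a, u) ∈ Y ∪ V → (a, v) ∈ Y ∪ V := by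
    intro a u v hu
    obtain ⟨w, hw⟩ : ∃ w, (a, w) ∈ Y := by
      rcases hu with hu | ⟨hu, -⟩
      · exact ⟨u, hu⟩
      · exact Set.nonempty_of_ncard_ne_zero fun h => hu (h ▸ dvd_zero _)
    by_cases ha : (a, (1 : P)) ∈ C
    · have hone : (a, (1 : P)) ∉ Y := fun h => hYC h ha
      rcases eq_or_ne v 1 with rfl | hv
      · have hpos : 0 < (Prod.mk a ⁻¹' Y).ncard := (Set.ncard_pos (Set.toFinite _)).2 ⟨w, hw⟩
        have hlt : (Prod.mk a ⁻¹' Y).ncard < Nat.card P :=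
          Set.ncard_lt_card fun h => hone (h.ge (Set.mem_univ 1))
        exact Or.inr ⟨Nat.not_dvd_of_pos_of_lt hpos hlt, rfl⟩
      · have hw1 : w ≠ 1 := fun h => hone (h ▸ hw)
        exact Or.inl (mk_mem_of_mk_one_mem hY hP hNP ha₀Y hw hw1 hv)
    · exact Or.inl (hYset.mk_mem_of_mk_one_notMem hP hNP hCmax ha hw v)
  have huniv : Y ∪ V = Set.univ := (hYset.union hVset).eq_univ_of_hull_eq_top
    ⟨_, Or.inl ha₀Y⟩ (bot_prod_top_le_stabilizer hfull) htop
  have hCY : (C : Set (N × P))ᶜ ⊆ Y := fun g hg =>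
    (huniv.ge (Set.mem_univ g)).resolve_right fun hgV => hg (hVC hgV)
  exact hYC.antisymm hCY ▸ hY

theorem isWreathSection_sup_hull (hP : (Nat.card P).Prime)
    (hNP : (Nat.card N).Coprime (Nat.card P)) (hC : A.IsASubgroup C)
    (hCmax : ∀ C', A.IsASubgroup C' → C' ≤ (⊤ : Subgroup N).prod (⊥ : Subgroup P) → C' ≤ C) :
    A.IsWreathSection (C ⊔ A.hull ((⊥ : Subgroup N).prod (⊤ : Subgroup P)))
      (A.hull ((⊥ : Subgroup N).prod (⊤ : Subgroup P))) := by
  refine isWreathSection_of_le_stabilizer (hC.sup isASubgroup_hull) isASubgroup_hull le_sup_right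
    fun X hX hXU => (isASet_of_mem hX).isASubgroup_stabilizer.hull_le <|
      bot_prod_top_le_stabilizer fun a u v hu =>
        (isASet_of_mem hX).mk_mem_of_mk_one_notMem hP hNP hCmax (fun ha => ?_) hu v
  have h1u : ((1, u) : N × P) ∈ A.hull ((⊥ : Subgroup N).prod (⊤ : Subgroup P)) :=
    le_hull (Subgroup.mem_prod.2 ⟨Subgroup.one_mem _, Subgroup.mem_top u⟩)
  exact Set.disjoint_left.1 hXU hu (by simpa using Subgroup.mul_mem_sup ha h1u)

end Prod

end SchurRing

theorem non_dense_sring_dichotomy_general {N P : Type*} [CommGroup N] [Fintype N] [CommGroup P]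
    [Fintype P] (hP : (Nat.card P).Prime) (hNP : (Nat.card N).Coprime (Nat.card P))
    (A : SchurRing (N × P))
    (hA : ¬ A.IsASubgroup ((⊤ : Subgroup N).prod (⊥ : Subgroup P)))
    (C : Subgroup (N × P)) (hC : A.IsASubgroup C)
    (hCle : C ≤ (⊤ : Subgroup N).prod (⊥ : Subgroup P))
    (hCmax : ∀ C', A.IsASubgroup C' → C' ≤ (⊤ : Subgroup N).prod (⊥ : Subgroup P) → C' ≤ C) :
    (A.IsWreathSection C C ∧ (C : Set (N × P))ᶜ ∈ A.basicSets) ∨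
    (∃ L : Subgroup (N × P), (⊥ : Subgroup N).prod (⊤ : Subgroup P) ≤ L ∧ L ≠ ⊤ ∧
      A.IsWreathSection (C ⊔ L) L) := by
  by_cases htop : A.hull ((⊥ : Subgroup N).prod (⊤ : Subgroup P)) = ⊤
  · left
    obtain ⟨⟨a₀, v⟩, hv, ha₀⟩ : ∃ x ∈ (⊤ : Subgroup N).prod (⊥ : Subgroup P), x ∉ C :=
      SetLike.not_le_iff_exists.1 fun h => hA (hCle.antisymm h ▸ hC)
    obtain rfl : v = 1 := Subgroup.mem_bot.1 (Subgroup.mem_prod.1 hv).2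
    have hcompl := SchurRing.compl_mem_basicSets_of_hull_eq_top hP hNP hC hCmax htop ha₀
    exact ⟨SchurRing.isWreathSection_self_of_compl_mem hC hcompl, hcompl⟩
  · right
    exact ⟨_, SchurRing.le_hull, htop, SchurRing.isWreathSection_sup_hull hP hNP hC hCmax⟩

theorem non_dense_sring_dichotomy (p : ℕ) [Fact p.Prime] (hp : 3 < p)
    (A : SchurRing (Multiplicative (ZMod 3 × ZMod 3) × Multiplicative (ZMod p)))
    -- the Sylow 3-subgroup E₉ × 1 is not an 𝒜-subgroup
    (hA : ¬ A.IsASubgroup ((⊤ : Subgroup (Multiplicative (ZMod 3 × ZMod 3))).prod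
            (⊥ : Subgroup (Multiplicative (ZMod p)))))
    -- C is the maximal 𝒜-subgroup contained in E₉ × 1
    (C : Subgroup (Multiplicative (ZMod 3 × ZMod 3) × Multiplicative (ZMod p)))
    (hC : A.IsASubgroup C)
    (hCle : C ≤ (⊤ : Subgroup (Multiplicative (ZMod 3 × ZMod 3))).prod
            (⊥ : Subgroup (Multiplicative (ZMod p))))
    (hCmax : ∀ C', A.IsASubgroup C' →
      C' ≤ (⊤ : Subgroup (Multiplicative (ZMod 3 × ZMod 3))).prod
            (⊥ : Subgroup (Multiplicative (ZMod p))) → C' ≤ C) :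
    -- (1) 𝒜 = 𝒜_C ≀ 𝒜_{G/C} with rk(𝒜_{G/C}) = 2
    (A.IsWreathSection C C ∧
      (C : Set (Multiplicative (ZMod 3 × ZMod 3) × Multiplicative (ZMod p)))ᶜ ∈ A.basicSets) ∨
    -- (2) 𝒜 is a U/L-wreath product with P ≤ L < G and U = CL
    (∃ L : Subgroup (Multiplicative (ZMod 3 × ZMod 3) × Multiplicative (ZMod p)),
      ((⊥ : Subgroup (Multiplicative (ZMod 3 × ZMod 3))).prod
        (⊤ : Subgroup (Multiplicative (ZMod p)))) ≤ L ∧ L ≠ ⊤ ∧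
      A.IsWreathSection (C ⊔ L) L) := by
  have h3p : Nat.Coprime 3 p := (Nat.coprime_primes Nat.prime_three Fact.out).2 hp.ne
  exact non_dense_sring_dichotomy_general (by simpa using (Fact.out : p.Prime))
    (by simpa using h3p.mul_left h3p) A hA C hC hCle hCmax
end
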